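/- Let M ≥ 3 be an integer and let T_j : ℂ → ℂ, j = 1,…,M, be the self-similarity maps T_j(z) = z/M + c_j, where the points c_1,…,c_M ∈ ℂ are not all collinear. Assume the T_j satisfy the open set condition: there is a nonempty bounded open set U ⊆ ℂ with T_j(U) ⊆ U for every j and with the sets T_1(U),…,T_M(U) pairwise disjoint. Let E_n := ⋃ over all words (j_1,…,j_n) ∈ {1,…,M}^n of the sets (T_{j_1} ∘ ⋯ ∘ T_{j_n})(U). Then there exist constants c > 0 and C > 0 such that for all n ≥ 2, Fav(E_n) ≤ C e^{-c √(log n)}. -/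

import Mathlib

open MeasureTheory

/-- Projection of a planar set onto the direction `θ`. -/
noncomputable def projDir (θ : ℝ) (E : Set ℂ) : Set ℝ :=
  (fun z : ℂ => (Complex.exp (-(θ : ℂ) * Complex.I) * z).re) '' E

/-- Favard length: the average over directions of the length of the projection. -/
noncomputable def fav (E : Set ℂ) : ℝ :=
  (1 / Real.pi) * ∫ θ in (0:ℝ)..Real.pi, (volume (projDir θ E)).toReal

/-- Image of `U` under the composition `T_{j₁} ∘ ⋯ ∘ T_{jₙ}` for the word `[j₁,…,jₙ]`. -/
def iterImg {M : ℕ} (T : Fin M → ℂ → ℂ) (U : Set ℂ) : List (Fin M) → Set ℂ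
  | [] => U
  | j :: w => T j '' iterImg T U w

section
open Finset

namespace Fav

lemma tri_sin (d h : ℝ) : ∫ y in (-h)..h, (h-|y|)*Real.sin (d*y) = 0 := by
  have h1 := intervalIntegral.integral_comp_neg (a := -h) (b := h) (fun y => (h-|y|)*Real.sin (d*y))
  simp only [abs_neg, mul_neg, Real.sin_neg, neg_neg] at h1
  rw [intervalIntegral.integral_neg] at h1
  linarith

lemma tri_cos0 (h : ℝ) (hh : 0 < h) : ∫ y in (-h)..h, (h-|y|) = h^2 := by
  have hi : ∀ a b, IntervalIntegrable (fun y => (h-|y|)) volume a b := fun a b =>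
    Continuous.intervalIntegrable (by fun_prop) _ _
  rw [← intervalIntegral.integral_add_adjacent_intervals (hi (-h) 0) (hi 0 h)]
  have e1 : ∫ y in (-h)..0, (h-|y|) = ∫ y in (-h)..0, (h+y) := by
    apply intervalIntegral.integral_congr
    intro y hy
    rw [Set.uIcc_of_le (by linarith)] at hy
    simp [abs_of_nonpos hy.2]
  have e2 : ∫ y in (0:ℝ)..h, (h-|y|) = ∫ y in (0:ℝ)..h, (h-y) := by
    apply intervalIntegral.integral_congr
    intro y hy
    rw [Set.uIcc_of_le (by linarith)] at hy
    simp [abs_of_nonneg hy.1]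
  rw [e1, e2, intervalIntegral.integral_add (by simp) (by simp), intervalIntegral.integral_sub (by simp) (by simp)]
  simp
  ring

lemma tri_cos (d h : ℝ) (hh : 0 < h) (hd : d ≠ 0) :
    ∫ y in (-h)..h, (h-|y|)*Real.cos (d*y) = 2*(1-Real.cos (d*h))/d^2 := by
  have hi : ∀ a b, IntervalIntegrable (fun y => (h-|y|)*Real.cos (d*y)) volume a b := fun a b =>
    Continuous.intervalIntegrable (by fun_prop) _ _
  have h1 := intervalIntegral.integral_comp_neg (a := 0) (b := h) (fun y => (h-|y|)*Real.cos (d*y))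
  simp only [abs_neg, mul_neg, Real.cos_neg, neg_zero] at h1
  rw [← intervalIntegral.integral_add_adjacent_intervals (hi (-h) 0) (hi 0 h), ← h1]
  have e2 : ∫ y in (0:ℝ)..h, (h-|y|)*Real.cos (d*y) = ∫ y in (0:ℝ)..h, (h-y)*Real.cos (d*y) := by
    apply intervalIntegral.integral_congr
    intro y hy
    rw [Set.uIcc_of_le (by linarith)] at hy
    simp [abs_of_nonneg hy.1]
  have e3 : ∫ y in (0:ℝ)..h, (h-y)*Real.cos (d*y) =
      ((h-h)*Real.sin (d*h)/d - Real.cos (d*h)/d^2) - ((h-0)*Real.sin (d*0)/d - Real.cos (d*0)/d^2) := by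
    apply intervalIntegral.integral_eq_sub_of_hasDerivAt (f := fun y => (h-y)*Real.sin (d*y)/d - Real.cos (d*y)/d^2)
    · intro x _
      have hs : HasDerivAt (fun y => Real.sin (d*y)) (Real.cos (d*x) * (d*1)) x :=
        ((hasDerivAt_id x).const_mul d).sin
      have hc : HasDerivAt (fun y => Real.cos (d*y)) (-Real.sin (d*x) * (d*1)) x :=
        ((hasDerivAt_id x).const_mul d).cos
      have hl : HasDerivAt (fun y => h - y) (-1) x := by simpa using (hasDerivAt_id x).const_sub h
      refine (((hl.mul hs).div_const d).sub (hc.div_const (d^2))).congr_deriv ?_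
      field_simp
      ring
    · exact Continuous.intervalIntegrable (by fun_prop) _ _
  rw [e2, e3]
  simp
  ring

/-- the kernel -/
noncomputable def ker (h d : ℝ) : ℝ := ∫ y in (-h)..h, (h-|y|)*Real.cos (d*y)

lemma ker_nonneg (h d : ℝ) (hh : 0 < h) : 0 ≤ ker h d := by
  unfold ker
  by_cases hd : d = 0
  · subst hd; simp only [zero_mul, Real.cos_zero, mul_one]; rw [tri_cos0 h hh]; positivity
  · rw [tri_cos d h hh hd]
    have := Real.cos_le_one (d*h)
    apply div_nonneg <;> nlinarith [sq_nonneg d]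

lemma ker_zero (h : ℝ) (hh : 0 < h) : ker h 0 = h^2 := by
  unfold ker; simp only [zero_mul, Real.cos_zero, mul_one]; rw [tri_cos0 h hh]

lemma ker_le (h d : ℝ) (hh : 0 < h) : ker h d ≤ h^2 := by
  rw [← tri_cos0 h hh]
  apply intervalIntegral.integral_mono_on (by linarith)
  · exact Continuous.intervalIntegrable (by fun_prop) _ _
  · exact Continuous.intervalIntegrable (by fun_prop) _ _
  · intro x hx
    have : 0 ≤ h - |x| := by rw [sub_nonneg, abs_le]; exact hx
    nlinarith [Real.cos_le_one (d*x)]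

lemma ker_le' (h d : ℝ) (hh : 0 < h) (hd : d ≠ 0) : ker h d ≤ 4/d^2 := by
  unfold ker
  rw [tri_cos d h hh hd]
  gcongr
  linarith [Real.neg_one_le_cos (d*h)]

/-- squared modulus of an exponential sum -/
noncomputable def AA {ι : Type*} [Fintype ι] (l : ι → ℝ) (y : ℝ) : ℝ :=
  ‖∑ i, Complex.exp ((y * l i : ℝ) * Complex.I)‖^2

lemma AA_cont {ι : Type*} [Fintype ι] (l : ι → ℝ) : Continuous (AA l) := by
  unfold AA; fun_prop

lemma AA_eq {ι : Type*} [Fintype ι] (l : ι → ℝ) (y : ℝ) :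
    AA l y = ∑ i, ∑ j, Real.cos ((l i - l j) * y) := by
  unfold AA
  have h1 : ∀ z : ℂ, ‖z‖^2 = z.re * z.re + z.im * z.im := fun z => by
    rw [Complex.sq_norm, Complex.normSq_apply]
  rw [h1]
  simp only [Complex.re_sum, Complex.im_sum, Complex.exp_ofReal_mul_I_re, Complex.exp_ofReal_mul_I_im]
  rw [Finset.sum_mul_sum, Finset.sum_mul_sum, ← Finset.sum_add_distrib]
  refine Finset.sum_congr rfl fun i _ => ?_
  rw [← Finset.sum_add_distrib]
  refine Finset.sum_congr rfl fun j _ => ?_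
  rw [← Real.cos_sub]; congr 1; ring

lemma V_eq {ι : Type*} [Fintype ι] (l : ι → ℝ) (a h : ℝ) :
    ∫ y in (-h)..h, (h-|y|) * AA l (a+y) = ∑ i, ∑ j, Real.cos ((l i - l j) * a) * ker h (l i - l j) := by
  have : ∀ y, (h-|y|) * AA l (a+y) = ∑ i, ∑ j, (Real.cos ((l i - l j) * a) * ((h-|y|)*Real.cos ((l i - l j) * y))
      - Real.sin ((l i - l j) * a) * ((h-|y|)*Real.sin ((l i - l j) * y))) := by
    intro y
    rw [AA_eq, Finset.mul_sum]
    refine Finset.sum_congr rfl fun i _ => ?_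
    rw [Finset.mul_sum]
    refine Finset.sum_congr rfl fun j _ => ?_
    rw [mul_add, Real.cos_add]; ring
  simp_rw [this]
  rw [intervalIntegral.integral_finsetSum (fun i _ => Continuous.intervalIntegrable (by fun_prop) _ _)]
  refine Finset.sum_congr rfl fun i _ => ?_
  rw [intervalIntegral.integral_finsetSum (fun i _ => Continuous.intervalIntegrable (by fun_prop) _ _)]
  refine Finset.sum_congr rfl fun j _ => ?_
  rw [intervalIntegral.integral_sub (Continuous.intervalIntegrable (by fun_prop) _ _) (Continuous.intervalIntegrable (by fun_prop) _ _),
    intervalIntegral.integral_const_mul, intervalIntegral.integral_const_mul, tri_sin]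
  simp [ker]

lemma AA_nonneg {ι : Type*} [Fintype ι] (l : ι → ℝ) (y : ℝ) : 0 ≤ AA l y := by unfold AA; positivity

lemma low_V {ι : Type*} [Fintype ι] (l : ι → ℝ) (a h : ℝ) (hh : 0 < h) :
    h * ∫ y in (a-h)..(a+h), AA l y ≤ ∫ y in (-(2*h))..(2*h), (2*h-|y|) * AA l (a+y) := by
  have e : ∫ y in (a-h)..(a+h), AA l y = ∫ y in (-h)..h, AA l (a+y) := by
    rw [intervalIntegral.integral_comp_add_left]; rfl
  have c : Continuous (fun y => AA l (a+y)) := (AA_cont l).comp (by fun_prop)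
  rw [e, ← intervalIntegral.integral_const_mul]
  calc ∫ y in (-h)..h, h * AA l (a+y) ≤ ∫ y in (-h)..h, (2*h-|y|) * AA l (a+y) := by
        apply intervalIntegral.integral_mono_on (by linarith)
        · exact Continuous.intervalIntegrable (by fun_prop) _ _
        · exact Continuous.intervalIntegrable (by fun_prop) _ _
        · intro x hx
          have : |x| ≤ h := abs_le.2 hx
          apply mul_le_mul_of_nonneg_right (by linarith) (AA_nonneg _ _)
    _ ≤ _ := by
        apply intervalIntegral.integral_mono_interval (by linarith) (by linarith) (by linarith)
        · filter_upwards [ae_restrict_mem measurableSet_Ioc] with x hx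
          have : |x| ≤ 2*h := abs_le.2 ⟨hx.1.le, hx.2⟩
          exact mul_nonneg (by linarith) (AA_nonneg _ _)
        · exact Continuous.intervalIntegrable (by fun_prop) _ _

lemma up_V {ι : Type*} [Fintype ι] (l : ι → ℝ) (h : ℝ) (hh : 0 < h) :
    ∫ y in (-h)..h, (h-|y|) * AA l (0+y) ≤ h * ∫ y in (-h)..h, AA l y := by
  have c := AA_cont l
  rw [← intervalIntegral.integral_const_mul]
  apply intervalIntegral.integral_mono_on (by linarith)
  · exact Continuous.intervalIntegrable (by fun_prop) _ _
  · exact Continuous.intervalIntegrable (by fun_prop) _ _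
  · intro x hx
    rw [zero_add]
    apply mul_le_mul_of_nonneg_right (by linarith [abs_nonneg x]) (AA_nonneg _ _)

lemma tri1 {ι : Type*} [Fintype ι] (l : ι → ℝ) (a h : ℝ) (hh : 0 < h) :
    ∫ y in (a-h)..(a+h), AA l y ≤ 2 * ∫ y in (-(2*h))..(2*h), AA l y := by
  have h1 := low_V l a h hh
  have h2 := up_V l (2*h) (by linarith)
  rw [V_eq] at h1 h2
  have h3 : ∑ i, ∑ j, Real.cos ((l i - l j) * a) * ker (2*h) (l i - l j) ≤ ∑ i, ∑ j, Real.cos ((l i - l j) * 0) * ker (2*h) (l i - l j) := by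
    refine Finset.sum_le_sum fun i _ => Finset.sum_le_sum fun j _ => ?_
    rw [mul_zero, Real.cos_zero]
    exact mul_le_mul_of_nonneg_right (Real.cos_le_one _) (ker_nonneg _ _ (by linarith))
  have := h1.trans (h3.trans h2)
  rw [mul_comm 2 h, mul_assoc] at this
  have := le_of_mul_le_mul_left this hh
  rwa [mul_comm h 2] at this

lemma tri2 {ι : Type*} [Fintype ι] (l : ι → ℝ) (h : ℝ) (hh : 0 < h) :
    h * Fintype.card ι ≤ ∫ y in (-h)..h, AA l y := by
  have h2 := up_V l h hh
  rw [V_eq] at h2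
  have h3 : h * (h * Fintype.card ι) ≤ ∑ i, ∑ j, Real.cos ((l i - l j) * 0) * ker h (l i - l j) := by
    have : h * (h * Fintype.card ι) = ∑ i : ι, h^2 := by simp; ring
    rw [this]
    refine Finset.sum_le_sum fun i _ => ?_
    have := Finset.single_le_sum (f := fun j => Real.cos ((l i - l j) * 0) * ker h (l i - l j)) (s := Finset.univ)
      (fun j _ => by simp [ker_nonneg _ _ hh]) (Finset.mem_univ i)
    simpa [ker_zero h hh] using this
  exact le_of_mul_le_mul_left (h3.trans h2) hh

lemma tri3 {ι : Type*} [Fintype ι] (l : ι → ℝ) (h : ℝ) (hh : 0 < h) :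
    h * ∫ y in (-h)..h, AA l y ≤ ∑ i, ∑ j, ker (2*h) (l i - l j) := by
  have h1 := low_V l 0 h hh
  rw [V_eq] at h1
  simpa using h1

end Fav

namespace Fav

noncomputable def xw {M : ℕ} (t : Fin M → ℝ) {n : ℕ} (w : Fin n → Fin M) : ℝ :=
  ∑ k, t (w k) / (M:ℝ)^(k:ℕ)

lemma xw_cons {M : ℕ} (t : Fin M → ℝ) {n : ℕ} (j : Fin M) (w : Fin n → Fin M) :
    xw t (Fin.cons j w : Fin (n+1) → Fin M) = t j + xw t w / M := by
  unfold xw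
  rw [Fin.sum_univ_succ, Finset.sum_div]
  simp [pow_succ, div_div]

lemma sum_words_succ {M : ℕ} {A : Type*} [AddCommMonoid A] (n : ℕ) (F : (Fin (n+1) → Fin M) → A) :
    ∑ w, F w = ∑ j : Fin M, ∑ w : Fin n → Fin M, F (Fin.cons j w : Fin (n+1) → Fin M) := by
  rw [← (Fin.consEquiv (fun _ : Fin (n+1) => Fin M)).sum_comp, Fintype.sum_prod_type]
  rfl

open Classical in
noncomputable def cnt {M : ℕ} (t : Fin M → ℝ) (R : ℝ) (n : ℕ) (x : ℝ) : ℕ :=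
  ∑ w : Fin n → Fin M, if |x - xw t w| ≤ R / (M:ℝ)^n then 1 else 0

lemma cnt_succ {M : ℕ} (hM : 2 ≤ M) (t : Fin M → ℝ) (R : ℝ) (n : ℕ) (x : ℝ) :
    cnt t R (n+1) x = ∑ j, cnt t R n (M * (x - t j)) := by
  have hM0 : (0:ℝ) < M := by positivity
  unfold cnt
  rw [sum_words_succ]
  refine Finset.sum_congr rfl fun j _ => Finset.sum_congr rfl fun w _ => ?_
  rw [xw_cons]
  have : |(M:ℝ) * (x - t j) - xw t w| = M * |x - (t j + xw t w / M)| := by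
    rw [← abs_of_pos hM0, ← abs_mul, abs_of_pos hM0]; congr 1; field_simp; ring
  refine if_congr ?_ rfl rfl
  rw [this, pow_succ, ← div_div, le_div_iff₀ hM0, mul_comm]

lemma cnt_add {M : ℕ} (hM : 2 ≤ M) (t : Fin M → ℝ) (R : ℝ) (m n : ℕ) (x : ℝ) :
    cnt t R (m+n) x = ∑ u : Fin m → Fin M, cnt t R n ((M:ℝ)^m * (x - xw t u)) := by
  have hM0 : (0:ℝ) < M := by positivity
  induction m generalizing x with
  | zero => simp [xw]
  | succ m ih =>
    rw [show m + 1 + n = (m + n) + 1 by ring, cnt_succ hM, sum_words_succ]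
    refine Finset.sum_congr rfl fun j _ => ?_
    rw [ih]
    refine Finset.sum_congr rfl fun w _ => ?_
    rw [xw_cons]
    congr 1
    field_simp
    ring

lemma cnt_zero {M : ℕ} (t : Fin M → ℝ) (R : ℝ) (x : ℝ) : cnt t R 0 x = if |x| ≤ R then 1 else 0 := by
  simp [cnt, xw]

lemma cnt_supp {M : ℕ} (hM : 2 ≤ M) (t : Fin M → ℝ) (R : ℝ) (hR : ∀ j, R / M + |t j| ≤ R) (n : ℕ) (x : ℝ)
    (h : cnt t R n x ≠ 0) : |x| ≤ R := by
  have hM0 : (0:ℝ) < M := by positivity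
  induction n generalizing x with
  | zero => by_contra hx; simp [cnt_zero, hx] at h
  | succ n ih =>
    rw [cnt_succ hM] at h
    obtain ⟨j, _, hj⟩ := Finset.exists_ne_zero_of_sum_ne_zero h
    have h1 := ih _ hj
    rw [abs_mul, abs_of_pos hM0, mul_comm, ← le_div_iff₀ hM0] at h1
    have := abs_add_le (x - t j) (t j)
    rw [sub_add_cancel] at this
    linarith [hR j]

lemma mem_of_scaled {M : ℕ} (hM : 2 ≤ M) (R : ℝ) (n : ℕ) (x y : ℝ) :
    |(M:ℝ)^n * (x - y)| ≤ R ↔ |x - y| ≤ R / (M:ℝ)^n := by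
  have hM0 : (0:ℝ) < (M:ℝ)^n := by positivity
  rw [abs_mul, abs_of_pos hM0, le_div_iff₀ hM0, mul_comm]

lemma cnt_le {M : ℕ} (t : Fin M → ℝ) (R : ℝ) (n : ℕ) (x : ℝ) : cnt t R n x ≤ M^n := by
  classical
  unfold cnt
  calc _ ≤ ∑ w : Fin n → Fin M, 1 := Finset.sum_le_sum fun w _ => by split_ifs <;> simp
    _ = M^n := by simp

lemma cnt_step {M : ℕ} (hM : 2 ≤ M) (t : Fin M → ℝ) (R : ℝ) (hR : ∀ j, R / M + |t j| ≤ R) (n : ℕ) (x : ℝ) :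
    cnt t R (n+1) x ≤ M * cnt t R n x := by
  rw [cnt_add hM]
  conv_rhs => unfold cnt
  rw [Finset.mul_sum]
  refine Finset.sum_le_sum fun u _ => ?_
  split_ifs with h
  · simpa using cnt_le t R 1 _
  · by_contra hc
    apply h
    rw [← mem_of_scaled hM]
    exact cnt_supp hM t R hR 1 _ (by omega)

open Classical in
noncomputable def GG {M : ℕ} (t : Fin M → ℝ) (R : ℝ) (K n : ℕ) : Finset (Fin n → Fin M) :=
  Finset.univ.filter fun w => ∃ x, |x - xw t w| ≤ R / (M:ℝ)^n ∧ K ≤ cnt t R n x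

lemma sq_bound {M : ℕ} (hM : 2 ≤ M) (t : Fin M → ℝ) (R : ℝ) (hR : ∀ j, R / M + |t j| ≤ R)
    (K : ℕ) (hK : 2 ≤ K) (n : ℕ) (x : ℝ) :
    (cnt t R n x)^2 ≤ K * cnt t R n x + ∑ m ∈ Finset.Icc 1 n,
      ∑ u ∈ GG t R K m, M * K * (cnt t R (n-m) ((M:ℝ)^m * (x - xw t u)))^2 := by
  classical
  by_cases h : cnt t R n x < K
  · have : (cnt t R n x)^2 ≤ K * cnt t R n x := by rw [sq]; exact Nat.mul_le_mul_right _ h.le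
    omega
  push Not at h
  have hex : ∃ m, K ≤ cnt t R m x := ⟨n, h⟩
  set m := Nat.find hex with hm
  have hm1 : K ≤ cnt t R m x := Nat.find_spec hex
  have hmn : m ≤ n := Nat.find_min' hex h
  have hm0 : m ≠ 0 := by
    intro h0
    rw [h0, cnt_zero] at hm1
    split_ifs at hm1 <;> omega
  obtain ⟨m', hm'⟩ := Nat.exists_eq_succ_of_ne_zero hm0
  have hlt : cnt t R m' x < K := by
    have := Nat.find_min hex (m := m') (by omega)
    omega
  have hle : cnt t R m x ≤ M * K := by
    rw [hm']
    exact (cnt_step hM t R hR m' x).trans (Nat.mul_le_mul_left _ hlt.le)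
  set S : Finset (Fin m → Fin M) := Finset.univ.filter fun u => |x - xw t u| ≤ R / (M:ℝ)^m with hS
  have hcard : S.card = cnt t R m x := by
    rw [hS, Finset.card_filter]; rfl
  have hSG : S ⊆ GG t R K m := by
    intro u hu
    rw [hS, Finset.mem_filter] at hu
    simp only [GG, Finset.mem_filter, Finset.mem_univ, true_and]
    exact ⟨x, hu.2, hm1⟩
  have hsum : cnt t R n x = ∑ u ∈ S, cnt t R (n-m) ((M:ℝ)^m * (x - xw t u)) := by
    conv_lhs => rw [show n = m + (n-m) by omega]
    rw [cnt_add hM]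
    symm
    apply Finset.sum_subset (Finset.subset_univ _)
    intro u _ hu
    by_contra hc
    apply hu
    rw [hS, Finset.mem_filter]
    refine ⟨Finset.mem_univ _, ?_⟩
    rw [← mem_of_scaled hM]
    exact cnt_supp hM t R hR _ _ hc
  have h1 : (cnt t R n x)^2 ≤ ∑ u ∈ S, M * K * (cnt t R (n-m) ((M:ℝ)^m * (x - xw t u)))^2 := by
    rw [hsum, ← Finset.mul_sum]
    calc _ ≤ S.card * ∑ u ∈ S, (cnt t R (n-m) ((M:ℝ)^m * (x - xw t u)))^2 := sq_sum_le_card_mul_sum_sq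
      _ ≤ _ := by rw [hcard]; exact Nat.mul_le_mul_right _ hle
  calc _ ≤ _ := h1
    _ ≤ ∑ u ∈ GG t R K m, M * K * (cnt t R (n-m) ((M:ℝ)^m * (x - xw t u)))^2 :=
        Finset.sum_le_sum_of_subset hSG
    _ ≤ ∑ m ∈ Finset.Icc 1 n, ∑ u ∈ GG t R K m, M * K * (cnt t R (n-m) ((M:ℝ)^m * (x - xw t u)))^2 :=
        Finset.single_le_sum (f := fun m => ∑ u ∈ GG t R K m, M * K * (cnt t R (n-m) ((M:ℝ)^m * (x - xw t u)))^2)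
          (fun _ _ => Nat.zero_le _) (Finset.mem_Icc.2 ⟨by omega, hmn⟩)
    _ ≤ _ := Nat.le_add_left _ _

lemma cnt_meas {M : ℕ} (t : Fin M → ℝ) (R : ℝ) (n : ℕ) : Measurable (fun x => (cnt t R n x : ENNReal)) := by
  unfold cnt
  push_cast
  refine Finset.measurable_sum _ fun w _ => ?_
  refine Measurable.ite ?_ measurable_const measurable_const
  exact measurableSet_le (by fun_prop) measurable_const

lemma lint_scale (f : ℝ → ENNReal) (c a : ℝ) (hc : 0 < c) :
    ∫⁻ x, f (c * (x - a)) = ENNReal.ofReal c⁻¹ * ∫⁻ x, f x := by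
  rw [lintegral_sub_right_eq_self (fun x => f (c * x)) a]
  have := lintegral_map_equiv (μ := volume) f (Homeomorph.mulLeft₀ c hc.ne').toMeasurableEquiv
  simp only [Homeomorph.toMeasurableEquiv_coe, Homeomorph.coe_mulLeft₀] at this
  rw [← this, Real.map_volume_mul_left hc.ne', lintegral_smul_measure, abs_of_pos (by positivity)]
  rfl

lemma vol_scale (S : Set ℝ) (c a : ℝ) (hc : 0 < c) :
    volume {x | c * (x - a) ∈ S} = ENNReal.ofReal c⁻¹ * volume S := by
  have h1 : {x | c * (x - a) ∈ S} = (fun x => x - a) ⁻¹' ((fun x => c * x) ⁻¹' S) := rfl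
  have h2 : (fun x : ℝ => x - a) = (fun x => x + (-a)) := by funext x; ring
  rw [h1, h2, measure_preimage_add_right, Real.volume_preimage_mul_left hc.ne', abs_of_pos (by positivity)]

lemma vol_abs (a r : ℝ) : volume {x | |x - a| ≤ r} = ENNReal.ofReal (2*r) := by
  have : {x | |x - a| ≤ r} = Metric.closedBall a r := by ext; simp [Real.dist_eq]
  rw [this, Real.volume_closedBall]

lemma lint_cnt {M : ℕ} (hM : 2 ≤ M) (t : Fin M → ℝ) (R : ℝ) (n : ℕ) :
    ∫⁻ x, (cnt t R n x : ENNReal) = ENNReal.ofReal (2*R) := by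
  unfold cnt
  push_cast
  rw [lintegral_finsetSum]
  · have : ∀ w : Fin n → Fin M, ∫⁻ x, (if |x - xw t w| ≤ R / (M:ℝ)^n then (1:ENNReal) else 0) = ENNReal.ofReal (2 * (R/(M:ℝ)^n)) := by
      intro w
      rw [← vol_abs (xw t w), ← lintegral_indicator_one (measurableSet_le (by fun_prop) measurable_const)]
      simp [Set.indicator_apply]
    simp_rw [this]
    simp only [Finset.sum_const, nsmul_eq_mul, Finset.card_univ]
    rw [← ENNReal.ofReal_natCast, ← ENNReal.ofReal_mul (by positivity)]
    congr 1
    simp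
    field_simp
  · intro w _
    refine Measurable.ite ?_ measurable_const measurable_const
    exact measurableSet_le (by fun_prop) measurable_const

lemma E2_bound {M : ℕ} (hM : 2 ≤ M) (t : Fin M → ℝ) (R : ℝ) (hR0 : 0 < R) (hR : ∀ j, R / M + |t j| ≤ R)
    (K : ℕ) (hK : 2 ≤ K) (N : ℕ) (hG : ∀ m, 1 ≤ m → m ≤ N → (GG t R K m).card * (2 * M * K * N) ≤ M^m)
    (n : ℕ) (hn : n ≤ N) :
    ∫⁻ x, ((cnt t R n x : ENNReal))^2 ≤ ENNReal.ofReal (4 * R * K) := by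
  induction n using Nat.strong_induction_on with
  | _ n ih =>
  have hmeas := fun n => (cnt_meas t R n).pow_const 2
  have hM0 : (0:ℝ) < M := by positivity
  have hK0 : (0:ℝ) < K := by positivity
  have h1 : ∀ x, ((cnt t R n x : ENNReal))^2 ≤ K * cnt t R n x + ∑ m ∈ Finset.Icc 1 n,
      ∑ u ∈ GG t R K m, (M * K : ENNReal) * ((cnt t R (n-m) ((M:ℝ)^m * (x - xw t u)) : ENNReal))^2 := by
    intro x
    exact_mod_cast sq_bound hM t R hR K hK n x
  have hmm : ∀ m u, Measurable fun x : ℝ => ((cnt t R (n-m) ((M:ℝ)^m * (x - u)) : ENNReal))^2 := fun m u =>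
    (hmeas (n-m)).comp (by fun_prop : Measurable fun x : ℝ => (M:ℝ)^m * (x - u))
  calc _ ≤ _ := lintegral_mono h1
    _ = K * ENNReal.ofReal (2*R) + ∑ m ∈ Finset.Icc 1 n,
      ∑ u ∈ GG t R K m, (M * K : ENNReal) * (ENNReal.ofReal ((M:ℝ)^m)⁻¹ * ∫⁻ x, ((cnt t R (n-m) x : ENNReal))^2) := by
        rw [lintegral_add_left ((cnt_meas t R n).const_mul _), lintegral_const_mul _ (cnt_meas t R n), lint_cnt hM,
          lintegral_finsetSum]
        · congr 1
          refine Finset.sum_congr rfl fun m _ => ?_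
          rw [lintegral_finsetSum _ (fun u _ => (hmm m _).const_mul _)]
          refine Finset.sum_congr rfl fun u _ => ?_
          rw [lintegral_const_mul _ (hmm m _)]
          rw [lint_scale (fun x => ((cnt t R (n-m) x : ENNReal))^2) _ _ (by positivity)]
        · exact fun m _ => Finset.measurable_sum _ fun u _ => (hmm m _).const_mul _
    _ ≤ K * ENNReal.ofReal (2*R) + ∑ m ∈ Finset.Icc 1 n,
      ∑ u ∈ GG t R K m, (M * K : ENNReal) * (ENNReal.ofReal ((M:ℝ)^m)⁻¹ * ENNReal.ofReal (4 * R * K)) := by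
        gcongr with m hm u hu
        rw [Finset.mem_Icc] at hm
        exact ih (n-m) (by omega) (by omega)
    _ = ENNReal.ofReal (K * (2*R) + ∑ m ∈ Finset.Icc 1 n,
      ∑ u ∈ GG t R K m, (M * K) * (((M:ℝ)^m)⁻¹ * (4 * R * K))) := by
        rw [ENNReal.ofReal_add (by positivity) (Finset.sum_nonneg fun _ _ => Finset.sum_nonneg fun _ _ => by positivity),
          ENNReal.ofReal_mul (by positivity), ENNReal.ofReal_sum_of_nonneg (fun _ _ => Finset.sum_nonneg fun _ _ => by positivity)]
        congr 1
        · simp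
        · refine Finset.sum_congr rfl fun m _ => ?_
          rw [ENNReal.ofReal_sum_of_nonneg (fun _ _ => by positivity)]
          refine Finset.sum_congr rfl fun u _ => ?_
          rw [ENNReal.ofReal_mul (p := (M:ℝ) * K) (by positivity), ENNReal.ofReal_mul (p := ((M:ℝ)^m)⁻¹) (by positivity),
            ENNReal.ofReal_mul (p := (M:ℝ)) (by positivity), ENNReal.ofReal_natCast, ENNReal.ofReal_natCast]
    _ ≤ _ := by
        apply ENNReal.ofReal_le_ofReal
        have h2 : ∀ m ∈ Finset.Icc 1 n, ∑ u ∈ GG t R K m, (M * K) * (((M:ℝ)^m)⁻¹ * (4 * R * K)) ≤ 2 * R * K / N := by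
          intro m hm
          rw [Finset.mem_Icc] at hm
          have hN : (0:ℝ) < N := by exact_mod_cast (by omega : 0 < N)
          have h3 : ((GG t R K m).card : ℝ) * (2 * M * K * N) ≤ (M:ℝ)^m := by exact_mod_cast hG m hm.1 (by omega)
          rw [Finset.sum_const, nsmul_eq_mul, le_div_iff₀ hN]
          have : ((GG t R K m).card : ℝ) * (M * K * (((M:ℝ) ^ m)⁻¹ * (4 * R * K))) * N
            = (((GG t R K m).card : ℝ) * (2 * M * K * N)) * (2 * R * K * ((M:ℝ)^m)⁻¹) := by ring
          rw [this]
          calc _ ≤ (M:ℝ)^m * (2 * R * K * ((M:ℝ)^m)⁻¹) := by gcongr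
            _ = _ := by field_simp
        have h4 := Finset.sum_le_sum h2
        rw [Finset.sum_const, nsmul_eq_mul, Nat.card_Icc, Nat.add_sub_cancel] at h4
        have h5 : (n:ℝ) * (2 * R * K / N) ≤ 2 * R * K := by
          rcases Nat.eq_zero_or_pos N with h0 | h0
          · subst h0; simp; positivity
          have hN : (0:ℝ) < N := by exact_mod_cast h0
          rw [mul_div_assoc', div_le_iff₀ hN, mul_comm]
          gcongr
        linarith

def LL {M : ℕ} (t : Fin M → ℝ) (R : ℝ) (n : ℕ) : Set ℝ := {x | cnt t R n x ≠ 0}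

lemma LL_anti {M : ℕ} (hM : 2 ≤ M) (t : Fin M → ℝ) (R : ℝ) (hR : ∀ j, R / M + |t j| ≤ R) :
    Antitone (LL t R) := by
  apply antitone_nat_of_succ_le
  intro n x hx
  simp only [LL, Set.mem_ofPred_eq] at hx ⊢
  intro h0
  have := cnt_step hM t R hR n x
  rw [h0] at this
  omega

lemma GG_vol {M : ℕ} (hM : 2 ≤ M) (t : Fin M → ℝ) (R : ℝ) (hR0 : 0 < R) 
    (K : ℕ) (hK : 2 ≤ K) (n : ℕ) :
    volume {x | ∃ w ∈ GG t R K n, |x - xw t w| ≤ R / (M:ℝ)^n} ≤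
      ENNReal.ofReal (6 * R / K * ((GG t R K n).card / (M:ℝ)^n)) := by
  classical
  have hM0 : (0:ℝ) < M := by positivity
  have hK0 : (0:ℝ) < K := by positivity
  have hms : ∀ w : Fin n → Fin M, MeasurableSet {x | |x - xw t w| ≤ 3 * R / (M:ℝ)^n} :=
    fun w => measurableSet_le (by fun_prop) measurable_const
  set f : ℝ → ENNReal := fun x => ∑ w ∈ GG t R K n, {x | |x - xw t w| ≤ 3 * R / (M:ℝ)^n}.indicator 1 x with hf
  have hfm : Measurable f := Finset.measurable_sum _ fun w _ => measurable_one.indicator (hms w)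
  have hfi : ∫⁻ x, f x = ENNReal.ofReal (6 * R * ((GG t R K n).card / (M:ℝ)^n)) := by
    rw [hf, lintegral_finsetSum _ (fun w _ => measurable_one.indicator (hms w))]
    simp_rw [lintegral_indicator_one (hms _), vol_abs]
    rw [Finset.sum_const, nsmul_eq_mul, ← ENNReal.ofReal_natCast, ← ENNReal.ofReal_mul (by positivity)]
    congr 1; ring
  have hsub : {x | ∃ w ∈ GG t R K n, |x - xw t w| ≤ R / (M:ℝ)^n} ⊆ {x | (K:ENNReal) ≤ f x} := by
    rintro x ⟨w, hw, hx⟩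
    simp only [GG, Finset.mem_filter, Finset.mem_univ, true_and] at hw
    obtain ⟨x', hx', hc⟩ := hw
    have h1 : f x = ((∑ w ∈ GG t R K n, if |x - xw t w| ≤ 3 * R / (M:ℝ)^n then 1 else 0 : ℕ) : ENNReal) := by
      rw [hf]; push_cast
      exact Finset.sum_congr rfl fun w _ => by simp [Set.indicator_apply]
    rw [Set.mem_ofPred_eq, h1]
    refine Nat.cast_le.2 ?_
    refine hc.trans ?_
    rw [← Finset.card_filter]
    unfold cnt
    rw [← Finset.card_filter]
    apply Finset.card_le_card
    intro u hu
    simp only [Finset.mem_filter, Finset.mem_univ, true_and, GG] at hu ⊢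
    refine ⟨⟨x', hu, hc⟩, ?_⟩
    have e : x - xw t u = (x - xw t w) + (xw t w - x') + (x' - xw t u) := by ring
    rw [e]
    have h2 := abs_add_three (x - xw t w) (xw t w - x') (x' - xw t u)
    rw [abs_sub_comm (xw t w) x'] at h2
    have : 3 * R / (M:ℝ)^n = 3 * (R / (M:ℝ)^n) := by ring
    linarith
  calc _ ≤ _ := measure_mono hsub
    _ ≤ (∫⁻ x, f x) / K := meas_ge_le_lintegral_div hfm.aemeasurable (by positivity) (by simp)
    _ = _ := by
      rw [hfi, ← ENNReal.ofReal_natCast, ← ENNReal.ofReal_div_of_pos hK0]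
      congr 1; ring

lemma LL_rec {M : ℕ} (hM : 2 ≤ M) (t : Fin M → ℝ) (R : ℝ) (hR0 : 0 < R) (hR : ∀ j, R / M + |t j| ≤ R)
    (K : ℕ) (hK : 2 ≤ K) (n m : ℕ) (l : ℝ) (hl : 0 ≤ l) (hm : volume (LL t R m) ≤ ENNReal.ofReal l) :
    volume (LL t R (n+m)) ≤ ENNReal.ofReal (6 * R / K * ((GG t R K n).card / (M:ℝ)^n)
      + (1 - (GG t R K n).card / (M:ℝ)^n) * l) := by
  classical
  have hM0 : (0:ℝ) < M := by positivity
  have hcard : ((GG t R K n).card : ℝ) ≤ (M:ℝ)^n := by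
    have := Finset.card_le_univ (GG t R K n)
    simp only [Fintype.card_fun, Fintype.card_fin] at this
    exact_mod_cast this
  have hp : 0 ≤ 1 - (GG t R K n).card / (M:ℝ)^n := by
    rw [sub_nonneg, div_le_one (by positivity)]; exact hcard
  have hsub : LL t R (n+m) ⊆ {x | ∃ w ∈ GG t R K n, |x - xw t w| ≤ R / (M:ℝ)^n} ∪
      ⋃ w ∈ (GG t R K n)ᶜ, {x | (M:ℝ)^n * (x - xw t w) ∈ LL t R m} := by
    intro x hx
    simp only [LL, Set.mem_ofPred_eq] at hx
    rw [cnt_add hM] at hx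
    obtain ⟨u, _, hu⟩ := Finset.exists_ne_zero_of_sum_ne_zero hx
    by_cases hG : u ∈ GG t R K n
    · left
      refine ⟨u, hG, ?_⟩
      rw [← mem_of_scaled hM]
      exact cnt_supp hM t R hR _ _ hu
    · right
      simp only [Set.mem_iUnion]
      exact ⟨u, Finset.mem_compl.2 hG, hu⟩
  calc _ ≤ _ := measure_mono hsub
    _ ≤ _ := measure_union_le _ _
    _ ≤ ENNReal.ofReal (6 * R / K * ((GG t R K n).card / (M:ℝ)^n)) +
        ENNReal.ofReal ((1 - (GG t R K n).card / (M:ℝ)^n) * l) := by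
      refine add_le_add (GG_vol hM t R hR0 K hK n) ?_
      refine (measure_biUnion_finset_le _ _).trans ?_
      simp_rw [vol_scale _ _ _ (by positivity : (0:ℝ) < (M:ℝ)^n)]
      rw [Finset.sum_const, Finset.card_compl, nsmul_eq_mul]
      simp only [Fintype.card_fun, Fintype.card_fin]
      calc _ ≤ ((M^n - (GG t R K n).card : ℕ):ENNReal) * (ENNReal.ofReal ((M:ℝ)^n)⁻¹ * ENNReal.ofReal l) := by gcongr
        _ = _ := by
          rw [← ENNReal.ofReal_natCast, ← ENNReal.ofReal_mul (by positivity), ← ENNReal.ofReal_mul (by positivity)]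
          congr 1
          rw [Nat.cast_sub (by exact_mod_cast hcard)]
          push_cast
          field_simp
    _ = _ := by
      rw [← ENNReal.ofReal_add (by positivity) (by positivity)]

/-- the dichotomy: large energy at some level forces small projections later -/
lemma LL_small {M : ℕ} (hM : 2 ≤ M) (t : Fin M → ℝ) (R : ℝ) (hR0 : 0 < R) (hR : ∀ j, R / M + |t j| ≤ R)
    (K : ℕ) (hK : 2 ≤ K) (N : ℕ) (n : ℕ) (hn : n ≤ N)
    (hE : ENNReal.ofReal (4 * R * K) < ∫⁻ x, ((cnt t R n x : ENNReal))^2) (J : ℕ) :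
    volume (LL t R (J * N)) ≤ ENNReal.ofReal (6 * R / K + 2 * R * (1 - 1 / (2 * M * K * N))^J) := by
  have hM0 : (0:ℝ) < M := by positivity
  have hK0 : (0:ℝ) < K := by positivity
  have hex : ∃ m, 1 ≤ m ∧ m ≤ N ∧ M^m < (GG t R K m).card * (2 * M * K * N) := by
    by_contra hc
    push Not at hc
    exact absurd (E2_bound hM t R hR0 hR K hK N hc n hn) (not_le.2 hE)
  obtain ⟨m, hm1, hmN, hm⟩ := hex
  have hN : (0:ℝ) < N := by exact_mod_cast (by omega : 0 < N)
  set p : ℝ := (GG t R K m).card / (M:ℝ)^m with hp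
  have hcard : ((GG t R K m).card : ℝ) ≤ (M:ℝ)^m := by
    have := Finset.card_le_univ (GG t R K m)
    simp only [Fintype.card_fun, Fintype.card_fin] at this
    exact_mod_cast this
  have hp1 : p ≤ 1 := by
    rw [hp, div_le_one (by positivity)]; exact hcard
  have hpa : 1 / (2 * M * K * N) ≤ p := by
    have : (M:ℝ)^m < (GG t R K m).card * (2 * M * K * N) := by exact_mod_cast hm
    rw [hp, div_le_div_iff₀ (by positivity) (by positivity)]
    linarith
  have key : ∀ J : ℕ, volume (LL t R (J * m)) ≤ ENNReal.ofReal (6 * R / K + 2 * R * (1 - p)^J) := by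
    intro J
    induction J with
    | zero =>
      have : LL t R (0 * m) ⊆ {x | |x - 0| ≤ R} := by
        intro x hx
        simpa using cnt_supp hM t R hR _ _ hx
      refine (measure_mono this).trans ?_
      rw [vol_abs]
      apply ENNReal.ofReal_le_ofReal
      have : 0 ≤ 6 * R / K := by positivity
      simp; linarith
    | succ J ih =>
      have h1 : 0 ≤ (1 - p)^J := pow_nonneg (by linarith) _
      have := LL_rec hM t R hR0 hR K hK m (J*m) _ (by positivity) ih
      rw [show (J+1)*m = m + J * m by ring]
      refine this.trans (ENNReal.ofReal_le_ofReal ?_)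
      rw [← hp]
      apply le_of_eq; ring
  refine (measure_mono (LL_anti hM t R hR (Nat.mul_le_mul_left J hmN))).trans ((key J).trans ?_)
  apply ENNReal.ofReal_le_ofReal
  have : (1-p)^J ≤ (1 - 1 / (2 * M * K * N))^J := pow_le_pow_left₀ (by linarith) (by linarith) _
  have := mul_le_mul_of_nonneg_left this (by positivity : 0 ≤ 2 * R)
  linarith

end Fav

namespace Fav

noncomputable def phi {M : ℕ} (t : Fin M → ℝ) (u : ℝ) : ℂ :=
  (1 / (M:ℂ)) * ∑ j, Complex.exp ((u * t j : ℝ) * Complex.I)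

noncomputable def PP {M : ℕ} (t : Fin M → ℝ) (n : ℕ) (y : ℝ) : ℂ :=
  ∏ k ∈ Finset.range n, phi t ((M:ℝ)^(k+1) * y)

lemma phi_cont {M : ℕ} (t : Fin M → ℝ) : Continuous (phi t) := by
  unfold phi; fun_prop

lemma PP_cont {M : ℕ} (t : Fin M → ℝ) (n : ℕ) : Continuous (PP t n) := by
  unfold PP
  exact continuous_finsetProd _ fun k _ => (phi_cont t).comp (by fun_prop)

lemma phi_le {M : ℕ} (t : Fin M → ℝ) (u : ℝ) : ‖phi t u‖ ≤ 1 := by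
  unfold phi
  rw [norm_mul]
  rcases Nat.eq_zero_or_pos M with h | h
  · subst h; simp
  have hM0 : (0:ℝ) < M := by exact_mod_cast h
  have h1 : ‖∑ j, Complex.exp ((u * t j : ℝ) * Complex.I)‖ ≤ M := by
    refine (norm_sum_le _ _).trans ?_
    simp_rw [Complex.norm_exp_ofReal_mul_I]
    simp
  have h2 : ‖1 / (M:ℂ)‖ = 1 / M := by simp
  rw [h2, div_mul_eq_mul_div, one_mul, div_le_one hM0]
  exact h1

lemma PP_le {M : ℕ} (t : Fin M → ℝ) (n : ℕ) (y : ℝ) : ‖PP t n y‖ ≤ 1 := by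
  unfold PP
  rw [norm_prod]
  exact Finset.prod_le_one (fun _ _ => norm_nonneg _) fun _ _ => phi_le _ _

lemma PP_add {M : ℕ} (t : Fin M → ℝ) (a b : ℕ) (y : ℝ) :
    PP t (a+b) y = PP t a y * PP t b ((M:ℝ)^a * y) := by
  unfold PP
  rw [Finset.prod_range_add]
  congr 1
  refine Finset.prod_congr rfl fun k _ => ?_
  congr 1; ring

lemma PP_eq {M : ℕ} (hM : 2 ≤ M) (t : Fin M → ℝ) (n : ℕ) (y : ℝ) :
    PP t n y = (1 / (M:ℂ)^n) * ∑ w : Fin n → Fin M, Complex.exp ((y * ((M:ℝ)^n * xw t w) : ℝ) * Complex.I) := by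
  have hM0 : (M:ℝ) ≠ 0 := by positivity
  have hM1 : (M:ℂ) ≠ 0 := by exact_mod_cast hM0
  induction n with
  | zero => simp [PP, xw]
  | succ n ih =>
    unfold PP at ih ⊢
    rw [Finset.prod_range_succ, ih, sum_words_succ]
    unfold phi
    have : ∀ j, ∑ w : Fin n → Fin M, Complex.exp ((y * ((M:ℝ)^(n+1) * xw t (Fin.cons j w : Fin (n+1) → Fin M)) : ℝ) * Complex.I)
      = Complex.exp (((M:ℝ)^(n+1) * y * t j : ℝ) * Complex.I) * ∑ w : Fin n → Fin M, Complex.exp ((y * ((M:ℝ)^n * xw t w) : ℝ) * Complex.I) := by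
      intro j
      rw [Finset.mul_sum]
      refine Finset.sum_congr rfl fun w _ => ?_
      rw [← Complex.exp_add, xw_cons, ← add_mul, ← Complex.ofReal_add]
      congr 3
      field_simp
      ring
    simp_rw [this]
    rw [← Finset.sum_mul]
    generalize ∑ w : Fin n → Fin M, Complex.exp ((y * ((M:ℝ)^n * xw t w) : ℝ) * Complex.I) = X
    generalize ∑ j, Complex.exp (((M:ℝ)^(n+1) * y * t j : ℝ) * Complex.I) = Y
    field_simp
    ring

lemma PP_AA {M : ℕ} (hM : 2 ≤ M) (t : Fin M → ℝ) (n : ℕ) (y : ℝ) :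
    ‖PP t n y‖^2 = AA (fun w : Fin n → Fin M => (M:ℝ)^n * xw t w) y / ((M:ℝ)^n)^2 := by
  rw [PP_eq hM, norm_mul, mul_pow]
  unfold AA
  generalize ∑ w : Fin n → Fin M, Complex.exp ((y * ((M:ℝ)^n * xw t w) : ℝ) * Complex.I) = X
  rw [norm_div, norm_pow, Complex.norm_natCast, norm_one]
  ring

lemma phi_near {M : ℕ} (hM : 2 ≤ M) (t : Fin M → ℝ) (T : ℝ) (hT : ∀ j, |t j| ≤ T) (u : ℝ) :
    1 - T * |u| ≤ ‖phi t u‖ := by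
  have hM0 : (0:ℝ) < M := by positivity
  have hM1 : (M:ℂ) ≠ 0 := by exact_mod_cast hM0.ne'
  have h1 : phi t u - 1 = (1/(M:ℂ)) * ∑ j, (Complex.exp ((u * t j : ℝ) * Complex.I) - 1) := by
    unfold phi
    rw [Finset.sum_sub_distrib]
    simp [mul_sub, hM1]
  have h2 : ‖phi t u - 1‖ ≤ T * |u| := by
    rw [h1, norm_mul]
    have : ‖∑ j, (Complex.exp ((u * t j : ℝ) * Complex.I) - 1)‖ ≤ M * (T * |u|) := by
      refine (norm_sum_le _ _).trans ?_
      calc _ ≤ ∑ j : Fin M, T * |u| := by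
            refine Finset.sum_le_sum fun j _ => ?_
            have := Real.norm_exp_I_mul_ofReal_sub_one_le (x := u * t j)
            rw [mul_comm Complex.I] at this
            refine this.trans ?_
            rw [Real.norm_eq_abs, abs_mul, mul_comm]
            gcongr
            exact hT j
        _ = _ := by simp
    have h3 : ‖1 / (M:ℂ)‖ = 1 / M := by simp
    rw [h3]
    calc _ ≤ 1 / M * (M * (T * |u|)) := by gcongr
      _ = _ := by field_simp
  have h3 := norm_sub_norm_le (1:ℂ) (phi t u)
  rw [norm_sub_rev] at h3
  simp at h3
  linarith

lemma PP_near' {M : ℕ} (hM : 2 ≤ M) (t : Fin M → ℝ) (T : ℝ) (hT0 : 0 ≤ T) (hT : ∀ j, |t j| ≤ T) (n : ℕ) (y : ℝ) :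
    1 - 2 * T * ((M:ℝ)^n * |y|) ≤ ‖PP t n y‖ := by
  have hM0 : (2:ℝ) ≤ M := by exact_mod_cast hM
  induction n with
  | zero => simp [PP]; positivity
  | succ n ih =>
    have e : PP t (n+1) y = PP t n y * phi t ((M:ℝ)^(n+1) * y) := by
      unfold PP; rw [Finset.prod_range_succ]
    rw [e, norm_mul]
    have h1 := PP_le t n y
    have h2 := phi_le t ((M:ℝ)^(n+1) * y)
    have h3 := phi_near hM t T hT ((M:ℝ)^(n+1) * y)
    rw [abs_mul, abs_of_pos (by positivity : (0:ℝ) < (M:ℝ)^(n+1))] at h3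
    have h4 : 0 ≤ T * ((M:ℝ)^n * |y|) := by positivity
    have h5 : (M:ℝ)^(n+1) * |y| = M * ((M:ℝ)^n * |y|) := by ring
    rw [h5] at h3 ⊢
    nlinarith [mul_nonneg (sub_nonneg.2 h1) (sub_nonneg.2 h2)]

lemma PP_near {M : ℕ} (hM : 2 ≤ M) (t : Fin M → ℝ) (T : ℝ) (hT0 : 0 ≤ T) (hT : ∀ j, |t j| ≤ T)
    (δ : ℝ) (hδ : 4 * T * δ ≤ 1) (n : ℕ) (y : ℝ) (hy : (M:ℝ)^n * |y| ≤ δ) :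
    1/2 ≤ ‖PP t n y‖ := by
  have := PP_near' hM t T hT0 hT n y
  nlinarith [mul_le_mul_of_nonneg_left hy hT0]

lemma sum_C0 : ∃ C0 : ℝ, 1 ≤ C0 ∧ ∀ (S : Finset ℤ) (i : ℤ), ∑ j ∈ S, 1 / (1 + ((i - j : ℤ):ℝ)^2) ≤ C0 := by
  have hs : Summable (fun j : ℤ => 1 / (1 + (j:ℝ)^2)) := by
    have h1 : Summable (fun j : ℤ => 1 / (j:ℝ)^2) := Real.summable_one_div_int_pow.2 (by norm_num)
    refine Summable.of_norm_bounded_eventually h1 ?_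
    rw [Filter.eventually_cofinite]
    refine (Set.finite_singleton (0:ℤ)).subset ?_
    intro j hj
    by_contra h0
    apply hj
    have : (j:ℝ) ≠ 0 := by exact_mod_cast h0
    rw [Real.norm_of_nonneg (by positivity)]
    gcongr
    linarith
  refine ⟨1 + ∑' j : ℤ, 1 / (1 + (j:ℝ)^2), ?_, ?_⟩
  · have : 0 ≤ ∑' j : ℤ, 1 / (1 + (j:ℝ)^2) := tsum_nonneg fun j => by positivity
    linarith
  · intro S i
    have h2 : ∑ j ∈ S, 1 / (1 + ((i - j : ℤ):ℝ)^2) = ∑ k ∈ S.image (fun j => i - j), 1 / (1 + (k:ℝ)^2) := by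
      rw [Finset.sum_image]
      intro a _ b _ hab
      simpa using hab
    rw [h2]
    have := hs.sum_le_tsum (S.image (fun j => i - j)) (fun j _ => by positivity)
    linarith

lemma ker_bin (δ : ℝ) (h0 : 0 < δ) (h1 : δ ≤ 1/4) (x y : ℝ) :
    ker (2*δ) (x - y) ≤ 20 * (1 / (1 + ((⌊x⌋ - ⌊y⌋ : ℤ):ℝ)^2)) := by
  push_cast
  set m : ℝ := (⌊x⌋:ℝ) - ⌊y⌋ with hm
  rw [mul_one_div]
  have a1 := Int.floor_le x
  have a2 := Int.lt_floor_add_one x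
  have a3 := Int.floor_le y
  have a4 := Int.lt_floor_add_one y
  by_cases hm2 : |m| < 2
  · have : m^2 ≤ 4 := by
      rw [← sq_abs]; nlinarith [abs_nonneg m]
    refine (ker_le _ _ (by linarith)).trans ?_
    rw [le_div_iff₀ (by positivity)]
    nlinarith
  · push Not at hm2
    have hd : |m| / 2 ≤ |x - y| := by
      have : |m| ≤ |x - y| + 1 := by
        rw [hm, abs_le]
        have := abs_le.1 (le_refl |x - y|)
        constructor <;> linarith
      linarith
    have hne : x - y ≠ 0 := by
      intro h; rw [h] at hd; simp at hd; linarith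
    refine (ker_le' _ _ (by linarith) hne).trans ?_
    rw [div_le_div_iff₀ (by positivity) (by positivity), ← sq_abs m, ← sq_abs (x-y)]
    nlinarith [abs_nonneg m, abs_nonneg (x-y)]

lemma schur {ι : Type*} [Fintype ι] (b : ι → ℤ) (C0 : ℝ)
    (hC : ∀ (S : Finset ℤ) (i : ℤ), ∑ j ∈ S, 1 / (1 + ((i - j : ℤ):ℝ)^2) ≤ C0) :
    ∑ w, ∑ w', 1 / (1 + ((b w - b w' : ℤ):ℝ)^2) ≤
      C0 * ∑ i ∈ Finset.univ.image b, (((Finset.univ.filter fun w => b w = i).card : ℝ))^2 := by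
  classical
  set S := Finset.univ.image b with hS
  set N : ℤ → ℝ := fun i => ((Finset.univ.filter fun w => b w = i).card : ℝ) with hN
  have hf : ∀ F : ℤ → ℝ, ∑ w, F (b w) = ∑ i ∈ S, N i * F i := by
    intro F
    rw [← Finset.sum_fiberwise_of_maps_to (t := S) (g := b) (fun w _ => Finset.mem_image_of_mem _ (Finset.mem_univ _))]
    refine Finset.sum_congr rfl fun i _ => ?_
    rw [Finset.sum_congr rfl (g := fun _ => F i) (by intro w hw; rw [(Finset.mem_filter.1 hw).2])]
    simp [hN]
  have e1 : ∑ w, ∑ w', 1 / (1 + ((b w - b w' : ℤ):ℝ)^2) = ∑ i ∈ S, N i * ∑ j ∈ S, N j * (1 / (1 + ((i - j : ℤ):ℝ)^2)) := by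
    rw [← hf (fun i => ∑ j ∈ S, N j * (1 / (1 + ((i - j : ℤ):ℝ)^2)))]
    refine Finset.sum_congr rfl fun w _ => ?_
    rw [← hf (fun j => 1 / (1 + ((b w - j : ℤ):ℝ)^2))]
  rw [e1]
  set f : ℤ → ℤ → ℝ := fun i j => 1 / (1 + ((i - j : ℤ):ℝ)^2) with hfd
  have hsymm : ∀ i j, f i j = f j i := by
    intro i j; simp only [hfd]; push_cast; congr 2; ring
  have hpos : ∀ i j, 0 ≤ f i j := fun i j => by simp only [hfd]; positivity
  calc ∑ i ∈ S, N i * ∑ j ∈ S, N j * f i j ≤ ∑ i ∈ S, ∑ j ∈ S, (N i^2/2 * f i j + N j^2/2 * f j i) := by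
        refine Finset.sum_le_sum fun i _ => ?_
        rw [Finset.mul_sum]
        refine Finset.sum_le_sum fun j _ => ?_
        rw [← hsymm i j]
        nlinarith [mul_nonneg (sq_nonneg (N i - N j)) (hpos i j)]
    _ = ∑ i ∈ S, ∑ j ∈ S, N i^2 * f i j := by
        simp_rw [Finset.sum_add_distrib]
        rw [Finset.sum_comm (f := fun i j => N j^2/2 * f j i), ← Finset.sum_add_distrib]
        refine Finset.sum_congr rfl fun i _ => ?_
        rw [← Finset.sum_add_distrib]
        refine Finset.sum_congr rfl fun j _ => ?_
        ring
    _ ≤ _ := by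
        rw [Finset.mul_sum]
        refine Finset.sum_le_sum fun i _ => ?_
        rw [← Finset.mul_sum, mul_comm]
        gcongr
        exact hC S i

lemma cnt_low {M : ℕ} (hM : 2 ≤ M) (t : Fin M → ℝ) (R : ℝ) (hR : 1 ≤ R) (n : ℕ) :
    ENNReal.ofReal (((M:ℝ)^n)⁻¹ * ∑ i ∈ Finset.univ.image (fun w : Fin n → Fin M => ⌊(M:ℝ)^n * xw t w⌋),
      (((Finset.univ.filter fun w : Fin n → Fin M => ⌊(M:ℝ)^n * xw t w⌋ = i).card : ℝ))^2) ≤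
    ∫⁻ x, ((cnt t R n x : ENNReal))^2 := by
  classical
  have hM0 : (0:ℝ) < (M:ℝ)^n := by positivity
  set b : (Fin n → Fin M) → ℤ := fun w => ⌊(M:ℝ)^n * xw t w⌋ with hb
  set S := Finset.univ.image b with hS
  set N : ℤ → ℕ := fun i => (Finset.univ.filter fun w => b w = i).card with hN
  have hA : ∀ i : ℤ, {x : ℝ | ⌊(M:ℝ)^n * x⌋ = i} = {x | (M:ℝ)^n * (x - 0) ∈ Set.Ico (i:ℝ) (i+1)} := by
    intro i; ext x
    simp [Int.floor_eq_iff]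
  have hAm : ∀ i : ℤ, MeasurableSet {x : ℝ | ⌊(M:ℝ)^n * x⌋ = i} := by
    intro i; rw [hA]
    exact measurableSet_Ico.preimage (by fun_prop : Measurable fun x : ℝ => (M:ℝ)^n * (x - 0))
  have hAv : ∀ i : ℤ, volume {x : ℝ | ⌊(M:ℝ)^n * x⌋ = i} = ENNReal.ofReal ((M:ℝ)^n)⁻¹ := by
    intro i; rw [hA, vol_scale _ _ _ hM0]; simp
  have h1 : ∀ x, ∑ i ∈ S, ((N i)^2 : ℕ) * ({x : ℝ | ⌊(M:ℝ)^n * x⌋ = i}.indicator 1 x : ENNReal) ≤ ((cnt t R n x : ENNReal))^2 := by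
    intro x
    have : ∀ i ∈ S, (((N i)^2 : ℕ):ENNReal) * ({x : ℝ | ⌊(M:ℝ)^n * x⌋ = i}.indicator 1 x : ENNReal) =
        if i = ⌊(M:ℝ)^n * x⌋ then (((N i)^2 : ℕ):ENNReal) else 0 := by
      intro i _
      simp [Set.indicator_apply, eq_comm]
    rw [Finset.sum_congr rfl this, Finset.sum_ite_eq']
    split_ifs with h
    · rw [Nat.cast_pow]
      gcongr
      unfold cnt
      rw [← Finset.card_filter]
      apply Finset.card_le_card
      intro w hw
      simp only [Finset.mem_filter, Finset.mem_univ, true_and] at hw ⊢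
      have e : |(M:ℝ)^n * (x - xw t w)| ≤ R := by
        have a1 := Int.floor_le ((M:ℝ)^n * x)
        have a2 := Int.lt_floor_add_one ((M:ℝ)^n * x)
        have a3 := Int.floor_le ((M:ℝ)^n * xw t w)
        have a4 := Int.lt_floor_add_one ((M:ℝ)^n * xw t w)
        simp only [hb] at hw
        rw [hw] at a3 a4
        rw [mul_sub, abs_le]
        constructor <;> linarith
      exact (mem_of_scaled hM R n _ _).1 e
    · simp
  calc _ = ∑ i ∈ S, ((N i)^2 : ℕ) * ENNReal.ofReal ((M:ℝ)^n)⁻¹ := by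
        rw [Finset.mul_sum, ENNReal.ofReal_sum_of_nonneg (fun _ _ => by positivity)]
        refine Finset.sum_congr rfl fun i _ => ?_
        rw [← ENNReal.ofReal_natCast, ← ENNReal.ofReal_mul (by positivity), mul_comm]
        push_cast; rfl
    _ = ∫⁻ x, ∑ i ∈ S, ((N i)^2 : ℕ) * ({x : ℝ | ⌊(M:ℝ)^n * x⌋ = i}.indicator 1 x : ENNReal) := by
        rw [lintegral_finsetSum _ (fun i _ => (measurable_one.indicator (hAm i)).const_mul _)]
        refine Finset.sum_congr rfl fun i _ => ?_
        rw [lintegral_const_mul _ (measurable_one.indicator (hAm i)), lintegral_indicator_one (hAm i), hAv]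
    _ ≤ _ := lintegral_mono h1

noncomputable def SS {M : ℕ} (t : Fin M → ℝ) (δ : ℝ) (n : ℕ) : ℝ := (M:ℝ)^n * ∫ y in (-δ)..δ, ‖PP t n y‖^2

lemma U_bound : ∃ C0 : ℝ, 1 ≤ C0 ∧ ∀ (M : ℕ) (_ : 2 ≤ M) (t : Fin M → ℝ) (R : ℝ) (_ : 1 ≤ R) (δ : ℝ) (_ : 0 < δ)
    (_ : δ ≤ 1/4) (n : ℕ), ENNReal.ofReal (δ * SS t δ n) ≤ ENNReal.ofReal C0 * ∫⁻ x, ((cnt t R n x : ENNReal))^2 := by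
  obtain ⟨C0, hC1, hC⟩ := sum_C0
  refine ⟨20 * C0, by linarith, ?_⟩
  intro M hM t R hR δ hδ hδ1 n
  have hM0 : (0:ℝ) < (M:ℝ)^n := by positivity
  have h1 := tri3 (fun w : Fin n → Fin M => (M:ℝ)^n * xw t w) δ hδ
  have h2 : δ * SS t δ n ≤ 20 * C0 * (((M:ℝ)^n)⁻¹ * ∑ i ∈ Finset.univ.image (fun w : Fin n → Fin M => ⌊(M:ℝ)^n * xw t w⌋),
      (((Finset.univ.filter fun w : Fin n → Fin M => ⌊(M:ℝ)^n * xw t w⌋ = i).card : ℝ))^2) := by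
    have e : δ * SS t δ n = ((M:ℝ)^n)⁻¹ * (δ * ∫ y in (-δ)..δ, AA (fun w : Fin n → Fin M => (M:ℝ)^n * xw t w) y) := by
      unfold SS
      simp_rw [PP_AA hM]
      rw [intervalIntegral.integral_div]
      field_simp
    rw [e, mul_left_comm (20 * C0)]
    refine mul_le_mul_of_nonneg_left ?_ (by positivity)
    refine h1.trans ?_
    have h3 := schur (fun w : Fin n → Fin M => ⌊(M:ℝ)^n * xw t w⌋) C0 hC
    rw [mul_assoc]
    refine le_trans ?_ (mul_le_mul_of_nonneg_left h3 (by norm_num : (0:ℝ) ≤ 20))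
    rw [Finset.mul_sum]
    refine Finset.sum_le_sum fun w _ => ?_
    rw [Finset.mul_sum]
    exact Finset.sum_le_sum fun w' _ => ker_bin δ hδ hδ1 _ _
  calc _ ≤ _ := ENNReal.ofReal_le_ofReal h2
    _ = _ := ENNReal.ofReal_mul (by positivity)
    _ ≤ _ := by gcongr; exact cnt_low hM t R hR n

end Fav

namespace Fav

lemma mvt_low (g g' : ℝ → ℝ) (hg : ∀ x, HasDerivAt g (g' x) x) (S : Set ℝ) (hS : S.OrdConnected) (κ : ℝ)
    (hκ : ∀ x ∈ S, κ ≤ g' x) (x y : ℝ) (hx : x ∈ S) (hy : y ∈ S) (hxy : x < y) : κ * (y - x) ≤ g y - g x := by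
  obtain ⟨ξ, hξ, he⟩ := exists_hasDerivAt_eq_slope g g' hxy (fun z _ => (hg z).continuousAt.continuousWithinAt)
    (fun z _ => hg z)
  have h1 := hκ ξ (hS.out hx hy (Set.Ioo_subset_Icc_self hξ))
  rw [he, le_div_iff₀ (by linarith)] at h1
  exact h1

lemma vdc (ν : Measure ℝ) (β : ENNReal) (h : ℝ) (hh : 0 < h)
    (hν : ∀ S : Set ℝ, (∀ x ∈ S, ∀ y ∈ S, |x - y| ≤ 2*h) → ν S ≤ β) (p : ℕ) :
    ∀ (κ : ℝ) (_ : 0 < κ) (G : ℕ → ℝ → ℝ) (_ : ∀ i x, HasDerivAt (G i) (G (i+1) x) x) (S : Set ℝ) (_ : S.OrdConnected)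
    (_ : ∀ x ∈ S, κ ≤ G p x), ν {x | x ∈ S ∧ |G 0 x| < κ * h^p} ≤ 3^p * β := by
  induction p with
  | zero =>
    intro κ hκ G hG S hS hp
    have : {x | x ∈ S ∧ |G 0 x| < κ * h^0} = ∅ := by
      ext x
      simp only [pow_zero, mul_one, Set.mem_ofPred_eq, Set.mem_empty_iff_false, iff_false, not_and, not_lt]
      intro hx
      exact (hp x hx).trans (le_abs_self _)
    rw [this]; simp
  | succ p ih =>
    intro κ hκ G hG S hS hp
    have hmv := mvt_low (G p) (G (p+1)) (hG p) S hS κ hp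
    have hmono : ∀ x ∈ S, ∀ y ∈ S, x ≤ y → G p x ≤ G p y := by
      intro x hx y hy hxy
      rcases hxy.eq_or_lt with e | e
      · rw [e]
      · have := hmv x y hx hy e
        nlinarith
    set S1 := {x | x ∈ S ∧ κ * h ≤ G p x} with hS1
    set S2 := {x | x ∈ S ∧ κ * h ≤ - G p x} with hS2
    set S3 := {x | x ∈ S ∧ |G p x| < κ * h} with hS3
    have o1 : S1.OrdConnected := by
      refine ⟨fun x hx y hy z hz => ?_⟩
      have hzS := hS.out hx.1 hy.1 hz
      exact ⟨hzS, hx.2.trans (hmono x hx.1 z hzS hz.1)⟩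
    have o2 : S2.OrdConnected := by
      refine ⟨fun x hx y hy z hz => ?_⟩
      have hzS := hS.out hx.1 hy.1 hz
      exact ⟨hzS, hy.2.trans (neg_le_neg (hmono z hzS y hy.1 hz.2))⟩
    have b1 := ih (κ*h) (by positivity) G hG S1 o1 (fun x hx => hx.2)
    have b2 := ih (κ*h) (by positivity) (fun i x => - G i x) (fun i x => (hG i x).neg) S2 o2 (fun x hx => hx.2)
    have b3 : ν S3 ≤ β := by
      apply hν
      intro x hx y hy
      have a1 := abs_lt.1 hx.2
      have a2 := abs_lt.1 hy.2
      rcases lt_trichotomy x y with e | e | e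
      · have := hmv x y hx.1 hy.1 e
        rw [abs_of_neg (by linarith)]
        nlinarith
      · rw [e]; simp; positivity
      · have := hmv y x hy.1 hx.1 e
        rw [abs_of_pos (by linarith)]
        nlinarith
    have hsub : {x | x ∈ S ∧ |G 0 x| < κ * h^(p+1)} ⊆ {x | x ∈ S1 ∧ |G 0 x| < κ * h * h^p} ∪
        ({x | x ∈ S2 ∧ |-G 0 x| < κ * h * h^p} ∪ S3) := by
      rintro x ⟨hx, hx0⟩
      have e : κ * h^(p+1) = κ * h * h^p := by ring
      rw [e] at hx0
      by_cases c1 : κ * h ≤ G p x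
      · exact Or.inl ⟨⟨hx, c1⟩, hx0⟩
      by_cases c2 : κ * h ≤ - G p x
      · exact Or.inr (Or.inl ⟨⟨hx, c2⟩, by rwa [abs_neg]⟩)
      · exact Or.inr (Or.inr ⟨hx, abs_lt.2 ⟨by linarith, by linarith⟩⟩)
    calc _ ≤ _ := measure_mono hsub
      _ ≤ 3^p * β + (3^p * β + β) := (measure_union_le _ _).trans (add_le_add b1 ((measure_union_le _ _).trans (add_le_add b2 b3)))
      _ ≤ 3^p * β + (3^p * β + 3^p * β) := by
        gcongr
        calc β = 1 * β := (one_mul _).symm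
          _ ≤ 3^p * β := by gcongr; exact one_le_pow₀ (by norm_num)
      _ = _ := by ring

noncomputable def DD {M : ℕ} (t : Fin M → ℝ) (p : ℕ) (u : ℝ) : ℂ :=
  (1 / (M:ℂ)) * ∑ j, (Complex.I * t j)^p * Complex.exp ((u * t j : ℝ) * Complex.I)

lemma DD_zero {M : ℕ} (t : Fin M → ℝ) (u : ℝ) : DD t 0 u = phi t u := by simp [DD, phi]

lemma DD_deriv {M : ℕ} (t : Fin M → ℝ) (p : ℕ) (u : ℝ) : HasDerivAt (DD t p) (DD t (p+1) u) u := by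
  unfold DD
  apply HasDerivAt.const_mul
  apply HasDerivAt.fun_sum
  intro j _
  have h1 : HasDerivAt (fun u : ℝ => ((u * t j : ℝ) : ℂ) * Complex.I) (t j * Complex.I) u := by
    have h0 : HasDerivAt (fun u : ℝ => u * t j) (t j) u := by simpa using (hasDerivAt_id u).mul_const (t j)
    exact (h0.ofReal_comp).mul_const _
  have h2 := (h1.cexp).const_mul ((Complex.I * t j)^p)
  exact h2.congr_deriv (by ring)

lemma DD_le {M : ℕ} (t : Fin M → ℝ) (T : ℝ) (hT1 : 1 ≤ T) (hT : ∀ j, |t j| ≤ T) (p q : ℕ) (hq : p ≤ q) (u : ℝ) : ‖DD t p u‖ ≤ T^q := by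
  unfold DD
  rw [norm_mul]
  have hT0 : 0 < T^q := by positivity
  rcases Nat.eq_zero_or_pos M with h | h
  · subst h; simp; positivity
  have hM0 : (0:ℝ) < M := by exact_mod_cast h
  have h1 : ‖∑ j, (Complex.I * t j)^p * Complex.exp ((u * t j : ℝ) * Complex.I)‖ ≤ M * T^q := by
    refine (norm_sum_le _ _).trans ?_
    calc _ ≤ ∑ j : Fin M, T^q := by
          refine Finset.sum_le_sum fun j _ => ?_
          rw [norm_mul, Complex.norm_exp_ofReal_mul_I, norm_pow, norm_mul, Complex.norm_I, one_mul, mul_one, Complex.norm_real, Real.norm_eq_abs]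
          exact (pow_le_pow_left₀ (abs_nonneg _) (hT j) _).trans (pow_le_pow_right₀ hT1 hq)
      _ = _ := by simp
  have h2 : ‖1 / (M:ℂ)‖ = 1 / M := by simp
  rw [h2, div_mul_eq_mul_div, one_mul, div_le_iff₀ hM0, mul_comm]
  exact h1

lemma FF_le {M : ℕ} (t : Fin M → ℝ) (T : ℝ) (hT1 : 1 ≤ T) (hT : ∀ j, |t j| ≤ T) (u κ : ℝ) (S : Finset (Fin M)) :
    ∀ p : ℕ, (∀ q ≤ p + S.card, ‖DD t q u‖ ≤ κ) →
    ‖(1 / (M:ℂ)) * ∑ j, (Complex.I * t j)^p * (∏ k ∈ S, (Complex.I * t j - Complex.I * t k)) * Complex.exp ((u * t j : ℝ) * Complex.I)‖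
      ≤ (1+T)^S.card * κ := by
  classical
  induction S using Finset.induction_on with
  | empty =>
    intro p hp
    simpa [DD] using hp p (by simp)
  | insert a S ha ih =>
    intro p hp
    rw [Finset.card_insert_of_notMem ha] at hp ⊢
    have h1 := ih (p+1) (fun q hq => hp q (by omega))
    have h2 := ih p (fun q hq => hp q (by omega))
    have e : (1 / (M:ℂ)) * ∑ j, (Complex.I * t j)^p * (∏ k ∈ insert a S, (Complex.I * t j - Complex.I * t k)) * Complex.exp ((u * t j : ℝ) * Complex.I)
      = (1 / (M:ℂ)) * ∑ j, (Complex.I * t j)^(p+1) * (∏ k ∈ S, (Complex.I * t j - Complex.I * t k)) * Complex.exp ((u * t j : ℝ) * Complex.I)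
      - Complex.I * t a * ((1 / (M:ℂ)) * ∑ j, (Complex.I * t j)^p * (∏ k ∈ S, (Complex.I * t j - Complex.I * t k)) * Complex.exp ((u * t j : ℝ) * Complex.I)) := by
      rw [mul_left_comm, ← mul_sub, Finset.mul_sum (a := Complex.I * t a), ← Finset.sum_sub_distrib]
      congr 1
      refine Finset.sum_congr rfl fun j _ => ?_
      rw [Finset.prod_insert ha]
      ring
    rw [e]
    refine (norm_sub_le _ _).trans ?_
    rw [norm_mul (Complex.I * t a), norm_mul Complex.I, Complex.norm_I, one_mul, Complex.norm_real, Real.norm_eq_abs]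
    have h3 := mul_le_mul (hT a) h2 (norm_nonneg _) (by linarith)
    calc _ ≤ (1+T)^S.card * κ + T * ((1+T)^S.card * κ) := add_le_add h1 h3
      _ = _ := by ring

lemma DD_big {M : ℕ} (hM : 2 ≤ M) (t : Fin M → ℝ) (T : ℝ) (hT1 : 1 ≤ T) (hT : ∀ j, |t j| ≤ T) (τ : ℝ) (hτ : 0 < τ) (hτ1 : τ ≤ 1)
    (i0 : Fin M) (hi0 : ∀ j ≠ i0, τ ≤ |t i0 - t j|) (u : ℝ) :
    ∃ p < M, τ^M / (M * (1+T)^M) ≤ ‖DD t p u‖ := by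
  by_contra hc
  push Not at hc
  have hM0 : (0:ℝ) < M := by positivity
  have hcard : (Finset.univ.erase i0).card = M - 1 := by simp
  have h1 := FF_le t T hT1 hT u (τ^M / (M * (1+T)^M)) (Finset.univ.erase i0) 0 (fun q hq => (hc q (by omega)).le)
  rw [Finset.sum_eq_single i0, hcard] at h1
  · have h2 : ‖(1 / (M:ℂ))‖ = 1 / M := by simp
    rw [norm_mul, norm_mul, norm_mul, Complex.norm_exp_ofReal_mul_I, h2, pow_zero, norm_one, one_mul, mul_one, norm_prod] at h1
    have h3 : τ^(M-1) ≤ ∏ k ∈ Finset.univ.erase i0, ‖Complex.I * t i0 - Complex.I * t k‖ := by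
      rw [← hcard, ← Finset.prod_const]
      refine Finset.prod_le_prod (fun _ _ => hτ.le) fun k hk => ?_
      rw [← mul_sub, norm_mul, Complex.norm_I, one_mul, ← Complex.ofReal_sub, Complex.norm_real]
      exact hi0 k (Finset.ne_of_mem_erase hk)
    have h4 : 1 / M * τ^(M-1) ≤ (1+T)^(M-1) * (τ^M / (M * (1+T)^M)) := by
      refine le_trans ?_ h1
      gcongr
    obtain ⟨m, rfl⟩ : ∃ m, M = m + 1 := ⟨M-1, by omega⟩
    simp only [Nat.add_sub_cancel] at h4
    have h5 : (1+T)^m * (τ^(m+1) / (((m+1:ℕ):ℝ) * (1+T)^(m+1))) = 1 / ((m+1:ℕ):ℝ) * τ^m * (τ / (1+T)) := by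
      have : (1+T) ≠ 0 := by linarith
      field_simp
      ring
    rw [h5] at h4
    have h6 : 0 < 1 / ((m+1:ℕ):ℝ) * τ^m := by positivity
    have h7 : τ / (1+T) < 1 := by rw [div_lt_one (by linarith)]; linarith
    nlinarith
  · intro j _ hj
    rw [Finset.prod_eq_zero (Finset.mem_erase.2 ⟨hj, Finset.mem_univ _⟩ : j ∈ _) (sub_self _)]
    simp
  · intro h; simp at h

lemma ssv_local {M : ℕ} (hM : 2 ≤ M) (t : Fin M → ℝ) (T : ℝ) (hT1 : 1 ≤ T) (hT : ∀ j, |t j| ≤ T) (τ : ℝ) (hτ : 0 < τ) (hτ1 : τ ≤ 1)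
    (i0 : Fin M) (hi0 : ∀ j ≠ i0, τ ≤ |t i0 - t j|) (κ : ℝ) (hκ : κ = τ^M / (M * (1+T)^M))
    (ν : Measure ℝ) (β : ENNReal) (h : ℝ) (hh : 0 < h) (hh1 : h ≤ 1)
    (hν : ∀ S : Set ℝ, (∀ x ∈ S, ∀ y ∈ S, |x - y| ≤ 2*h) → ν S ≤ β) (u0 : ℝ) :
    ν {u | u ∈ Set.Icc u0 (u0 + κ / (2 * T^M)) ∧ ‖phi t u‖ < κ / 2 * h^M} ≤ 3^M * β := by
  have hM0 : (0:ℝ) < M := by positivity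
  have hκ0 : 0 < κ := by rw [hκ]; positivity
  obtain ⟨p, hp, hD⟩ := DD_big hM t T hT1 hT τ hτ hτ1 i0 hi0 u0
  rw [← hκ] at hD
  set ω : ℂ := (starRingEnd ℂ) (DD t p u0) / ‖DD t p u0‖ with hω
  have hne : ‖DD t p u0‖ ≠ 0 := by linarith
  have hω1 : ‖ω‖ = 1 := by rw [hω]; simp [hne]
  have hω2 : (ω * DD t p u0).re = ‖DD t p u0‖ := by
    rw [hω, div_mul_eq_mul_div, mul_comm, Complex.mul_conj, Complex.normSq_eq_norm_sq, ← Complex.ofReal_div, Complex.ofReal_re]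
    field_simp
  set G : ℕ → ℝ → ℝ := fun i u => (ω * DD t i u).re with hG
  have hGd : ∀ i u, HasDerivAt (G i) (G (i+1) u) u := by
    intro i u
    have := ((DD_deriv t i u).const_mul ω)
    exact (Complex.reCLM.hasFDerivAt.comp_hasDerivAt u this)
  have hGle : ∀ u, |G (p+1) u| ≤ T^M := by
    intro u
    refine (Complex.abs_re_le_norm _).trans ?_
    rw [norm_mul, hω1, one_mul]
    exact DD_le t T hT1 hT _ _ (by omega) _
  have hlow : ∀ u ∈ Set.Icc u0 (u0 + κ / (2 * T^M)), κ/2 ≤ G p u := by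
    intro u hu
    have hT0 : 0 < T^M := by positivity
    have hb : T^M * (u - u0) ≤ κ/2 := by
      have : u - u0 ≤ κ / (2 * T^M) := by linarith [hu.2]
      calc _ ≤ T^M * (κ / (2 * T^M)) := by gcongr
        _ = _ := by field_simp
    rcases hu.1.eq_or_lt with e | e
    · rw [← e]; show κ/2 ≤ (ω * DD t p u0).re; rw [hω2]; linarith
    have := mvt_low (G p) (G (p+1)) (hGd p) Set.univ Set.ordConnected_univ (-T^M) (fun x _ => (abs_le.1 (hGle x)).1) u0 u trivial trivial e
    have h0 : G p u0 = ‖DD t p u0‖ := hω2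
    rw [h0] at this
    linarith
  have hfin := vdc ν β h hh hν p (κ/2) (by linarith) G hGd _ Set.ordConnected_Icc hlow
  have hsub : {u | u ∈ Set.Icc u0 (u0 + κ / (2 * T^M)) ∧ ‖phi t u‖ < κ / 2 * h^M} ⊆
      {x | x ∈ Set.Icc u0 (u0 + κ / (2 * T^M)) ∧ |G 0 x| < κ/2 * h^p} := by
    rintro u ⟨hu, hu2⟩
    refine ⟨hu, ?_⟩
    have h1 : |G 0 u| ≤ ‖phi t u‖ := by
      refine (Complex.abs_re_le_norm _).trans ?_
      rw [norm_mul, hω1, one_mul, DD_zero]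
    have h2 : h^M ≤ h^p := pow_le_pow_of_le_one hh.le hh1 hp.le
    have h3 : κ / 2 * h^M ≤ κ/2 * h^p := by gcongr
    linarith
  calc _ ≤ _ := measure_mono hsub
    _ ≤ _ := hfin
    _ ≤ _ := by
      gcongr
      · norm_num

lemma ssv {M : ℕ} (hM : 2 ≤ M) (t : Fin M → ℝ) (T : ℝ) (hT1 : 1 ≤ T) (hT : ∀ j, |t j| ≤ T) (τ : ℝ) (hτ : 0 < τ) (hτ1 : τ ≤ 1)
    (i0 : Fin M) (hi0 : ∀ j ≠ i0, τ ≤ |t i0 - t j|) (κ : ℝ) (hκ : κ = τ^M / (M * (1+T)^M))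
    (ν : Measure ℝ) (β : ENNReal) (h : ℝ) (hh : 0 < h) (hh1 : h ≤ 1)
    (hν : ∀ S : Set ℝ, (∀ x ∈ S, ∀ y ∈ S, |x - y| ≤ 2*h) → ν S ≤ β) (L : ℝ) (m : ℕ) (hm : 2 * L ≤ m * (κ / (2 * T^M))) :
    ν {u | |u| ≤ L ∧ ‖phi t u‖ < κ / 2 * h^M} ≤ (m+1) * (3^M * β) := by
  have hM0 : (0:ℝ) < M := by positivity
  have hκ0 : 0 < κ := by rw [hκ]; positivity
  set b := κ / (2 * T^M) with hb
  have hb0 : 0 < b := by positivity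
  have hsub : {u | |u| ≤ L ∧ ‖phi t u‖ < κ / 2 * h^M} ⊆ ⋃ i ∈ Finset.range (m+1),
      {u | u ∈ Set.Icc (-L + i * b) (-L + i * b + b) ∧ ‖phi t u‖ < κ / 2 * h^M} := by
    rintro u ⟨hu, hu2⟩
    have hu' := abs_le.1 hu
    have hq : 0 ≤ (u + L) / b := div_nonneg (by linarith) hb0.le
    have f1 := Nat.floor_le hq
    have f2 := Nat.lt_floor_add_one ((u + L) / b)
    rw [le_div_iff₀ hb0] at f1
    rw [div_lt_iff₀ hb0] at f2
    simp only [Set.mem_iUnion]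
    refine ⟨⌊(u + L) / b⌋₊, ?_, ⟨by linarith, by linarith⟩, hu2⟩
    rw [Finset.mem_range, Nat.lt_succ_iff]
    apply Nat.floor_le_of_le
    rw [div_le_iff₀ hb0]
    linarith
  calc _ ≤ _ := measure_mono hsub
    _ ≤ _ := measure_biUnion_finset_le _ _
    _ ≤ ∑ i ∈ Finset.range (m+1), 3^M * β := Finset.sum_le_sum fun i _ =>
        ssv_local hM t T hT1 hT τ hτ hτ1 i0 hi0 κ hκ ν β h hh hh1 hν _
    _ = _ := by simp

end Fav

namespace Fav

lemma lint_Icc (f : ℝ → ℝ) (hf : Continuous f) (h0 : ∀ x, 0 ≤ f x) (a b : ℝ) (hab : a ≤ b) :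
    ∫⁻ y in Set.Icc a b, ENNReal.ofReal (f y) = ENNReal.ofReal (∫ y in a..b, f y) := by
  rw [intervalIntegral.integral_of_le hab, ← integral_Icc_eq_integral_Ioc,
    ofReal_integral_eq_lintegral_ofReal (hf.continuousOn.integrableOn_Icc) (Filter.Eventually.of_forall h0)]

lemma PPsq_cont {M : ℕ} (t : Fin M → ℝ) (n : ℕ) : Continuous fun y => ‖PP t n y‖^2 := by
  have := PP_cont t n
  fun_prop

def ann (M : ℕ) (δ : ℝ) (l : ℕ) : Set ℝ := {y | δ / (M:ℝ)^l < |y| ∧ |y| ≤ δ}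

lemma ann_meas (M : ℕ) (δ : ℝ) (l : ℕ) : MeasurableSet (ann M δ l) :=
  MeasurableSet.inter (measurableSet_lt (f := fun _ : ℝ => δ / (M:ℝ)^l) (g := fun y : ℝ => |y|) measurable_const (by fun_prop))
    (measurableSet_le (f := fun y : ℝ => |y|) (g := fun _ => δ) (by fun_prop) measurable_const)

lemma PP_low {M : ℕ} (t : Fin M → ℝ) (n : ℕ) (y ε : ℝ) (hε : 0 ≤ ε) (h : ∀ k < n, ε ≤ ‖phi t ((M:ℝ)^(k+1) * y)‖) :
    ε^n ≤ ‖PP t n y‖ := by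
  unfold PP
  rw [norm_prod]
  conv_lhs => rw [← Finset.card_range n, ← Finset.prod_const]
  exact Finset.prod_le_prod (fun _ _ => hε) fun k hk => h k (Finset.mem_range.1 hk)

lemma E_L {M : ℕ} (hM : 2 ≤ M) (t : Fin M → ℝ) (δ : ℝ) (hδ : 0 < δ) (l m : ℕ) :
    δ / (M:ℝ)^m ≤ ∫ y in (-δ)..δ, ‖PP t m ((M:ℝ)^l * y)‖^2 := by
  have hM0 : (0:ℝ) < (M:ℝ)^l := by positivity
  have hM1 : (0:ℝ) < (M:ℝ)^m := by positivity
  rw [intervalIntegral.integral_comp_mul_left (fun y => ‖PP t m y‖^2) hM0.ne']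
  simp_rw [PP_AA hM]
  rw [intervalIntegral.integral_div]
  have := tri2 (fun w : Fin m → Fin M => (M:ℝ)^m * xw t w) ((M:ℝ)^l * δ) (by positivity)
  simp only [Fintype.card_fun, Fintype.card_fin] at this
  push_cast at this
  rw [mul_neg, smul_eq_mul, inv_mul_eq_div, div_div, div_le_div_iff₀ hM1 (by positivity)]
  calc _ = (M:ℝ)^l * δ * (M:ℝ)^m * (M:ℝ)^m := by ring
    _ ≤ _ := by gcongr

lemma E_b {M : ℕ} (hM : 2 ≤ M) (t : Fin M → ℝ) (δ : ℝ) (l m : ℕ) :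
    ∫ y in (-(δ/(M:ℝ)^l))..(δ/(M:ℝ)^l), ‖PP t m ((M:ℝ)^l * y)‖^2 = SS t δ m / (M:ℝ)^(l+m) := by
  have hM0 : (0:ℝ) < (M:ℝ)^l := by positivity
  rw [intervalIntegral.integral_comp_mul_left (fun y => ‖PP t m y‖^2) hM0.ne']
  unfold SS
  rw [show (M:ℝ)^l * (-(δ/(M:ℝ)^l)) = -δ by field_simp, show (M:ℝ)^l * ((δ/(M:ℝ)^l)) = δ by field_simp, smul_eq_mul, pow_add]
  field_simp

lemma E_P {M : ℕ} (hM : 2 ≤ M) (t : Fin M → ℝ) (δ : ℝ) (hδ : 0 < δ) (l a : ℕ) (x h : ℝ) (hh : h = δ / (4 * (M:ℝ)^l)) :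
    ∫ y in (x - 2*h)..(x+2*h), ‖PP t a ((M:ℝ)^l * y)‖^2 ≤ 2 * (SS t δ a / (M:ℝ)^(l+a)) := by
  have hM0 : (0:ℝ) < (M:ℝ)^l := by positivity
  have hM1 : (0:ℝ) < (M:ℝ)^a := by positivity
  rw [intervalIntegral.integral_comp_mul_left (fun y => ‖PP t a y‖^2) hM0.ne']
  unfold SS
  simp_rw [PP_AA hM]
  rw [intervalIntegral.integral_div, intervalIntegral.integral_div]
  have := tri1 (fun w : Fin a → Fin M => (M:ℝ)^a * xw t w) ((M:ℝ)^l * x) (δ/2) (by positivity)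
  rw [show (M:ℝ)^l * (x - 2*h) = (M:ℝ)^l * x - δ/2 by rw [hh]; field_simp; ring,
    show (M:ℝ)^l * (x + 2*h) = (M:ℝ)^l * x + δ/2 by rw [hh]; field_simp; ring]
  rw [show 2 * (δ/2) = δ by ring] at this
  rw [smul_eq_mul, pow_add]
  calc _ ≤ ((M:ℝ)^l)⁻¹ * ((2 * ∫ y in (-δ)..δ, AA (fun w : Fin a → Fin M => (M:ℝ)^a * xw t w) y) / ((M:ℝ)^a)^2) := by gcongr
    _ = _ := by field_simp

set_option maxHeartbeats 1000000 in
lemma E_main {M : ℕ} (hM : 2 ≤ M) (t : Fin M → ℝ) (T : ℝ) (hT1 : 1 ≤ T) (hT : ∀ j, |t j| ≤ T) (τ : ℝ) (hτ : 0 < τ) (hτ1 : τ ≤ 1)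
    (i0 : Fin M) (hi0 : ∀ j ≠ i0, τ ≤ |t i0 - t j|) (κ : ℝ) (hκ : κ = τ^M / (M * (1+T)^M))
    (δ : ℝ) (hδ : 0 < δ) (hδ1 : δ ≤ 1) (l r a : ℕ) (B q : ℝ) (hB : 0 ≤ B)
    (hq : ∀ y, δ < |y| → |y| ≤ δ * (M:ℝ)^l → ‖PP t r y‖ ≤ q)
    (hS1 : SS t δ (r+a) ≤ B) (hS2 : SS t δ a ≤ B) (mm : ℕ) (hmm : 2 * (δ * (M:ℝ)^l) ≤ mm * (κ / (2 * T^M)))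
    (h : ℝ) (hh : h = δ / (4 * (M:ℝ)^(l+r))) (ε : ℝ) (hε : ε = κ/2*h^M) (H1 : 4 * B ≤ δ * (M:ℝ)^l)
    (H2 : l * ((mm+1) * (3^M * (8 * q^2 * B))) ≤ δ * (M:ℝ)^l) :
    ENNReal.ofReal (ε^(2*l) * δ / 2) ≤ ENNReal.ofReal ((M:ℝ)^(l+(r+a))) * ∫⁻ y in ann M δ l, ENNReal.ofReal (‖PP t (l+(r+a)) y‖^2) := by
  have hM0 : (0:ℝ) < M := by positivity
  have hM1 : (1:ℝ) ≤ M := by exact_mod_cast (by omega : 1 ≤ M)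
  have hML : (1:ℝ) ≤ (M:ℝ)^l := one_le_pow₀ hM1
  have hh0 : 0 < h := by rw [hh]; positivity
  have hh1 : h ≤ 1 := by
    rw [hh, div_le_one (by positivity)]
    have : (1:ℝ) ≤ (M:ℝ)^(l+r) := one_le_pow₀ hM1
    linarith
  have hκ0 : 0 < κ := by rw [hκ]; positivity
  have hε0 : 0 < ε := by rw [hε]; positivity
  set n := l + (r+a) with hn
  set β : ENNReal := ENNReal.ofReal (2 * q^2 * B / (M:ℝ)^n) with hβ
  set f : ℝ → ℝ := fun y => ‖PP t (r+a) ((M:ℝ)^l * y)‖^2 with hf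
  have hfc : Continuous f := (PPsq_cont t (r+a)).comp (by fun_prop)
  have hf0 : ∀ y, 0 ≤ f y := fun y => by positivity
  set I : ℝ → ENNReal := fun y => ENNReal.ofReal (f y) with hI
  have hIm : Measurable I := hfc.measurable.ennreal_ofReal
  set ν : Measure ℝ := volume.withDensity ((ann M δ l).indicator I) with hνd
  -- lower bound
  have hL : ENNReal.ofReal (δ / (M:ℝ)^(r+a)) ≤ ∫⁻ y in Set.Icc (-δ) δ, I y := by
    rw [lint_Icc f hfc hf0 _ _ (by linarith)]
    exact ENNReal.ofReal_le_ofReal (E_L hM t δ hδ l (r+a))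
  have hb : ∫⁻ y in Set.Icc (-(δ/(M:ℝ)^l)) (δ/(M:ℝ)^l), I y ≤ ENNReal.ofReal (B / (M:ℝ)^n) := by
    have : 0 < δ / (M:ℝ)^l := by positivity
    rw [lint_Icc f hfc hf0 _ _ (by linarith)]
    apply ENNReal.ofReal_le_ofReal
    rw [hf, E_b hM]
    gcongr
  have hsplit : ∫⁻ y in Set.Icc (-δ) δ, I y ≤ ENNReal.ofReal (B / (M:ℝ)^n) + ν Set.univ := by
    have hsub : Set.Icc (-δ) δ ⊆ Set.Icc (-(δ/(M:ℝ)^l)) (δ/(M:ℝ)^l) ∪ ann M δ l := by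
      intro y hy
      by_cases c : |y| ≤ δ/(M:ℝ)^l
      · exact Or.inl (abs_le.1 c)
      · exact Or.inr ⟨not_le.1 c, abs_le.2 hy⟩
    calc _ ≤ _ := lintegral_mono_set hsub
      _ ≤ _ := lintegral_union_le _ _ _
      _ ≤ _ := by
        refine add_le_add hb ?_
        rw [hνd, withDensity_apply _ MeasurableSet.univ, Measure.restrict_univ, lintegral_indicator (ann_meas _ _ _)]
  have hP : ∀ x, ν (Set.Icc (x - 2*h) (x+2*h)) ≤ β := by
    intro x
    rw [hνd, withDensity_apply _ measurableSet_Icc]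
    set g : ℝ → ℝ := fun y => q^2 * ‖PP t a ((M:ℝ)^(l+r) * y)‖^2 with hg
    have hgc : Continuous g := continuous_const.mul ((PPsq_cont t a).comp (by fun_prop))
    have hg0 : ∀ y, 0 ≤ g y := fun y => by positivity
    calc _ ≤ ∫⁻ y in Set.Icc (x - 2*h) (x+2*h), ENNReal.ofReal (g y) := by
          refine lintegral_mono fun y => ?_
          refine Set.indicator_le' (f := I) (g := fun y => ENNReal.ofReal (g y)) ?_ (fun _ _ => by simp) y
          rintro y ⟨hy1, hy2⟩
          apply ENNReal.ofReal_le_ofReal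
          show ‖PP t (r+a) ((M:ℝ)^l * y)‖^2 ≤ q^2 * ‖PP t a ((M:ℝ)^(l+r) * y)‖^2
          rw [PP_add, norm_mul, mul_pow]
          have e : (M:ℝ)^r * ((M:ℝ)^l * y) = (M:ℝ)^(l+r) * y := by ring
          rw [e]
          have habs : |(M:ℝ)^l * y| = (M:ℝ)^l * |y| := by rw [abs_mul, abs_of_pos (by positivity)]
          have := hq ((M:ℝ)^l * y) (by rw [habs, mul_comm]; rwa [div_lt_iff₀ (by positivity)] at hy1)
            (by rw [habs, mul_comm]; gcongr)
          gcongr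
      _ = ENNReal.ofReal (∫ y in (x - 2*h)..(x+2*h), g y) := lint_Icc g hgc hg0 _ _ (by linarith)
      _ ≤ _ := by
          apply ENNReal.ofReal_le_ofReal
          rw [hg, intervalIntegral.integral_const_mul]
          have := E_P hM t δ hδ (l+r) a x h hh
          have e : 2 * q^2 * B / (M:ℝ)^n = q^2 * (2 * (B / (M:ℝ)^(l+r+a))) := by rw [hn, ← add_assoc]; ring
          rw [e]
          refine mul_le_mul_of_nonneg_left (this.trans ?_) (by positivity)
          gcongr
  -- small values
  set L := δ * (M:ℝ)^l with hLd
  set Bk : ℕ → Set ℝ := fun k => (fun y => (M:ℝ)^(k+1) * y) ⁻¹' {u | |u| ≤ L ∧ ‖phi t u‖ < ε} with hBk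
  have hms : MeasurableSet {u | |u| ≤ L ∧ ‖phi t u‖ < ε} :=
    MeasurableSet.inter (measurableSet_le (f := fun y : ℝ => |y|) (g := fun _ => L) (by fun_prop) measurable_const)
      (measurableSet_lt (g := fun _ => ε) (phi_cont t).norm.measurable measurable_const)
  have hBm : ∀ k, MeasurableSet (Bk k) := fun k => hms.preimage (by fun_prop)
  have hBkle : ∀ k, ν (Bk k) ≤ (mm+1) * (3^M * β) := by
    intro k
    have hMk : (1:ℝ) ≤ (M:ℝ)^(k+1) := one_le_pow₀ hM1
    have hmeasf : Measurable (fun y : ℝ => (M:ℝ)^(k+1) * y) := by fun_prop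
    have := ssv hM t T hT1 hT τ hτ hτ1 i0 hi0 κ hκ (ν.map (fun y => (M:ℝ)^(k+1) * y)) β h hh0 hh1 ?_ L mm hmm
    · rw [← hε, Measure.map_apply hmeasf hms] at this
      exact this
    · intro S hS
      rcases S.eq_empty_or_nonempty with rfl | ⟨x, hx⟩
      · simp
      have hsub : S ⊆ Set.Icc (x - 2*h) (x+2*h) := by
        intro y hy
        have := abs_le.1 (hS x hx y hy)
        exact ⟨by linarith, by linarith⟩
      refine (measure_mono hsub).trans ?_
      rw [Measure.map_apply hmeasf measurableSet_Icc]
      refine (measure_mono ?_).trans (hP (x / (M:ℝ)^(k+1)))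
      rintro y ⟨h1, h2⟩
      have hpos : (0:ℝ) < (M:ℝ)^(k+1) := by positivity
      have e : x = (M:ℝ)^(k+1) * (x / (M:ℝ)^(k+1)) := by field_simp
      generalize x / (M:ℝ)^(k+1) = z at e ⊢
      subst e
      simp only at h1 h2
      have hle : 2 * h ≤ (M:ℝ)^(k+1) * (2 * h) := by nlinarith
      constructor
      · by_contra hc; push Not at hc; nlinarith [mul_lt_mul_of_pos_left hc hpos]
      · by_contra hc; push Not at hc; nlinarith [mul_lt_mul_of_pos_left hc hpos]
  set Bd : Set ℝ := ⋃ k ∈ Finset.range l, Bk k with hBd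
  have hBdm : MeasurableSet Bd := Finset.measurableSet_biUnion _ fun k _ => hBm k
  have hBdle : ν Bd ≤ l * ((mm+1) * (3^M * β)) := by
    calc _ ≤ _ := measure_biUnion_finset_le _ _
      _ ≤ ∑ k ∈ Finset.range l, (mm+1) * (3^M * β) := Finset.sum_le_sum fun k _ => hBkle k
      _ = _ := by simp
  set X : ENNReal := ∫⁻ y in ann M δ l, ENNReal.ofReal (‖PP t n y‖^2) with hX
  have hcomp : ν Bdᶜ ≤ ENNReal.ofReal ((ε^(2*l))⁻¹) * X := by
    rw [hνd, withDensity_apply _ hBdm.compl, hX, ← lintegral_indicator (ann_meas _ _ _),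
      ← lintegral_const_mul _ ((PPsq_cont t n).measurable.ennreal_ofReal.indicator (ann_meas _ _ _)),
      ← lintegral_indicator hBdm.compl]
    refine lintegral_mono fun y => ?_
    by_cases hy : y ∈ Bdᶜ
    · rw [Set.indicator_of_mem hy]
      by_cases hA : y ∈ ann M δ l
      · rw [Set.indicator_of_mem hA, Set.indicator_of_mem hA, ← ENNReal.ofReal_mul (by positivity)]
        apply ENNReal.ofReal_le_ofReal
        have h1 : ε^l ≤ ‖PP t l y‖ := by
          apply PP_low t l y ε hε0.le
          intro k hk
          by_contra hc
          push Not at hc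
          apply hy
          simp only [hBd, Set.mem_iUnion]
          refine ⟨k, Finset.mem_range.2 hk, ?_, hc⟩
          rw [abs_mul, abs_of_pos (by positivity), hLd, mul_comm]
          have : (M:ℝ)^(k+1) ≤ (M:ℝ)^l := pow_le_pow_right₀ hM1 hk
          have := hA.2
          gcongr
        have h2 : ‖PP t n y‖^2 = ‖PP t l y‖^2 * f y := by
          rw [hn, PP_add, norm_mul, mul_pow]
        rw [h2, inv_mul_eq_div, le_div_iff₀ (by positivity), mul_comm]
        refine mul_le_mul_of_nonneg_right ?_ (hf0 y)
        rw [mul_comm 2 l, pow_mul]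
        gcongr
      · rw [Set.indicator_of_notMem hA, Set.indicator_of_notMem hA]; simp
    · rw [Set.indicator_of_notMem hy]; simp
  have htot : ENNReal.ofReal (δ / (M:ℝ)^(r+a)) ≤ ENNReal.ofReal (B / (M:ℝ)^n) +
      (l * ((mm+1) * (3^M * β)) + ENNReal.ofReal ((ε^(2*l))⁻¹) * X) := by
    refine hL.trans (hsplit.trans (add_le_add le_rfl ?_))
    calc ν Set.univ = ν (Bd ∪ Bdᶜ) := by rw [Set.union_compl_self]
      _ ≤ _ := (measure_union_le _ _).trans (add_le_add hBdle hcomp)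
  by_cases hXt : X = ⊤
  · rw [hXt, ENNReal.mul_top]
    · exact le_top
    · rw [ne_eq, ENNReal.ofReal_eq_zero, not_le]; positivity
  obtain ⟨x, hx0, hxX⟩ : ∃ x : ℝ, 0 ≤ x ∧ X = ENNReal.ofReal x := ⟨X.toReal, ENNReal.toReal_nonneg, (ENNReal.ofReal_toReal hXt).symm⟩
  rw [hxX] at htot ⊢
  have e1 : (l:ENNReal) * ((mm+1) * (3^M * β)) = ENNReal.ofReal (l * ((mm+1) * (3^M * (2 * q^2 * B / (M:ℝ)^n)))) := by
    rw [hβ, ENNReal.ofReal_mul (by positivity), ENNReal.ofReal_mul (by positivity), ENNReal.ofReal_mul (by positivity),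
      ENNReal.ofReal_add (by positivity) (by positivity), ENNReal.ofReal_pow (by positivity)]
    simp
  rw [e1, ← ENNReal.ofReal_mul (by positivity), ← ENNReal.ofReal_add (by positivity) (by positivity),
    ← ENNReal.ofReal_add (by positivity) (by positivity), ENNReal.ofReal_le_ofReal_iff (by positivity)] at htot
  rw [← ENNReal.ofReal_mul (by positivity)]
  apply ENNReal.ofReal_le_ofReal
  have hMn : (0:ℝ) < (M:ℝ)^n := by positivity
  have h3 := mul_le_mul_of_nonneg_left htot hMn.le
  have e2 : (M:ℝ)^n * (δ / (M:ℝ)^(r+a)) = L := by rw [hn, pow_add, hLd]; field_simp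
  have e3 : (M:ℝ)^n * (B / (M:ℝ)^n + (l * ((mm+1) * (3^M * (2 * q^2 * B / (M:ℝ)^n))) + (ε^(2*l))⁻¹ * x))
    = B + (l * ((mm+1) * (3^M * (8 * q^2 * B))))/4 + (ε^(2*l))⁻¹ * ((M:ℝ)^n * x) := by field_simp; ring
  rw [e2, e3] at h3
  have h4 : L/2 ≤ (ε^(2*l))⁻¹ * ((M:ℝ)^n * x) := by linarith
  rw [inv_mul_eq_div, le_div_iff₀ (by positivity)] at h4
  have h5 : δ ≤ L := by rw [hLd]; nlinarith
  have h6 : 0 < ε^(2*l) := by positivity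
  nlinarith

lemma pigeon {M : ℕ} (hM : 2 ≤ M) (t : Fin M → ℝ) (T : ℝ) (hT1 : 1 ≤ T) (hT : ∀ j, |t j| ≤ T)
    (δ : ℝ) (hδ : 0 < δ) (hδ1 : 4 * T * δ ≤ 1) (l N Q : ℕ) (hQ : l * Q ≤ N) (η : ℝ) (hη : 0 ≤ η)
    (hlow : ∀ i < Q, ENNReal.ofReal η ≤ ENNReal.ofReal ((M:ℝ)^(N - l*i)) * ∫⁻ y in ann M δ l, ENNReal.ofReal (‖PP t (N-l*i) y‖^2)) :
    Q * η ≤ 4 * SS t δ N := by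
  have hM0 : (0:ℝ) < M := by positivity
  have hM1 : (1:ℝ) ≤ M := by exact_mod_cast (by omega : 1 ≤ M)
  set A : ℕ → Set ℝ := fun i => {y | (M:ℝ)^(l*i) * (y - 0) ∈ ann M δ l} with hA
  have hAm : ∀ i, MeasurableSet (A i) := fun i => (ann_meas M δ l).preimage (by fun_prop)
  have hAabs : ∀ i y, y ∈ A i ↔ δ < (M:ℝ)^(l*(i+1)) * |y| ∧ (M:ℝ)^(l*i) * |y| ≤ δ := by
    intro i y
    simp only [hA, ann, Set.mem_ofPred_eq, sub_zero]
    rw [abs_mul, abs_of_pos (by positivity : (0:ℝ) < (M:ℝ)^(l*i)), div_lt_iff₀ (by positivity), mul_add, mul_one, pow_add]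
    constructor
    · rintro ⟨h1, h2⟩; exact ⟨by linarith, h2⟩
    · rintro ⟨h1, h2⟩; exact ⟨by linarith, h2⟩
  have hdisj : ∀ i j, i < j → Disjoint (A i) (A j) := by
    intro i j hij
    rw [Set.disjoint_left]
    intro y hi hj
    rw [hAabs] at hi hj
    have : (M:ℝ)^(l*(i+1)) ≤ (M:ℝ)^(l*j) := pow_le_pow_right₀ hM1 (Nat.mul_le_mul_left _ hij)
    have := mul_le_mul_of_nonneg_right this (abs_nonneg y)
    linarith [hi.1, hj.2]
  have hpd : Set.PairwiseDisjoint (↑(Finset.range Q)) A := by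
    intro i _ j _ hij
    rcases lt_or_gt_of_ne hij with h | h
    · exact hdisj i j h
    · exact (hdisj j i h).symm
  have hpiece : ∀ i < Q, ENNReal.ofReal (η / (4 * (M:ℝ)^N)) ≤ ∫⁻ y in A i, ENNReal.ofReal (‖PP t N y‖^2) := by
    intro i hi
    have hiN : l * i ≤ N := (Nat.mul_le_mul_left _ hi.le).trans hQ
    set n := N - l*i with hn
    have hNn : N = l*i + n := by omega
    set F : ℝ → ENNReal := (ann M δ l).indicator (fun y => ENNReal.ofReal (‖PP t n y‖^2)) with hF
    have hFm : Measurable F := (PPsq_cont t n).measurable.ennreal_ofReal.indicator (ann_meas _ _ _)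
    have h1 : ENNReal.ofReal (1/4) * ∫⁻ y, F ((M:ℝ)^(l*i) * (y - 0)) ≤ ∫⁻ y in A i, ENNReal.ofReal (‖PP t N y‖^2) := by
      have hFm' : Measurable fun y => F ((M:ℝ)^(l*i) * (y - 0)) := hFm.comp (by fun_prop)
      rw [← lintegral_const_mul _ hFm', ← lintegral_indicator (hAm i)]
      refine lintegral_mono fun y => ?_
      by_cases hy : y ∈ A i
      · have hy' : (M:ℝ)^(l*i) * (y - 0) ∈ ann M δ l := hy
        rw [Set.indicator_of_mem hy, hF, Set.indicator_of_mem hy', ← ENNReal.ofReal_mul (by positivity)]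
        apply ENNReal.ofReal_le_ofReal
        rw [hNn, PP_add, norm_mul, mul_pow, sub_zero]
        have := PP_near hM t T (by linarith) hT δ hδ1 (l*i) y ((hAabs i y).1 hy).2
        refine mul_le_mul_of_nonneg_right ?_ (by positivity)
        nlinarith
      · have hy' : (M:ℝ)^(l*i) * (y - 0) ∉ ann M δ l := hy
        rw [Set.indicator_of_notMem hy, hF, Set.indicator_of_notMem hy']
        simp
    rw [lint_scale F _ _ (by positivity), hF, lintegral_indicator (ann_meas _ _ _)] at h1
    refine le_trans ?_ h1
    have h2 := hlow i hi
    rw [← hn] at h2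
    have h3 : ENNReal.ofReal (η / (4 * (M:ℝ)^N)) = ENNReal.ofReal (1/4) * (ENNReal.ofReal ((M:ℝ)^(l*i))⁻¹ * (ENNReal.ofReal (((M:ℝ)^n)⁻¹) * ENNReal.ofReal η)) := by
      rw [← ENNReal.ofReal_mul (by positivity), ← ENNReal.ofReal_mul (by positivity), ← ENNReal.ofReal_mul (by positivity)]
      congr 1
      rw [hNn, pow_add]
      field_simp
    rw [h3]
    gcongr
    calc _ ≤ ENNReal.ofReal (((M:ℝ)^n)⁻¹) * (ENNReal.ofReal ((M:ℝ)^n) * ∫⁻ y in ann M δ l, ENNReal.ofReal (‖PP t n y‖^2)) := by gcongr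
      _ = _ := by
        rw [← mul_assoc, ← ENNReal.ofReal_mul (by positivity), inv_mul_cancel₀ (by positivity)]
        simp
  have hsum : ∑ i ∈ Finset.range Q, ENNReal.ofReal (η / (4 * (M:ℝ)^N)) ≤ ∫⁻ y in Set.Icc (-δ) δ, ENNReal.ofReal (‖PP t N y‖^2) := by
    calc _ ≤ ∑ i ∈ Finset.range Q, ∫⁻ y in A i, ENNReal.ofReal (‖PP t N y‖^2) :=
          Finset.sum_le_sum fun i hi => hpiece i (Finset.mem_range.1 hi)
      _ = ∫⁻ y in ⋃ i ∈ Finset.range Q, A i, ENNReal.ofReal (‖PP t N y‖^2) := by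
          rw [lintegral_biUnion_finset hpd (fun i _ => hAm i)]
      _ ≤ _ := by
          apply lintegral_mono_set
          intro y hy
          simp only [Set.mem_iUnion] at hy
          obtain ⟨i, _, hy⟩ := hy
          rw [hAabs] at hy
          apply abs_le.1
          have : (1:ℝ) ≤ (M:ℝ)^(l*i) := one_le_pow₀ hM1
          nlinarith [abs_nonneg y, hy.2]
  rw [lint_Icc _ (PPsq_cont t N) (fun y => by positivity) _ _ (by linarith), Finset.sum_const, nsmul_eq_mul, Finset.card_range,
    ← ENNReal.ofReal_natCast, ← ENNReal.ofReal_mul (by positivity), ENNReal.ofReal_le_ofReal_iff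
      (intervalIntegral.integral_nonneg (by linarith) fun y _ => by positivity)] at hsum
  unfold SS
  rw [mul_div_assoc', div_le_iff₀ (by positivity)] at hsum
  linarith

lemma spectral {M : ℕ} (hM : 2 ≤ M) (t : Fin M → ℝ) (T : ℝ) (hT1 : 1 ≤ T) (hT : ∀ j, |t j| ≤ T) (τ : ℝ) (hτ : 0 < τ) (hτ1 : τ ≤ 1)
    (i0 : Fin M) (hi0 : ∀ j ≠ i0, τ ≤ |t i0 - t j|) (κ : ℝ) (hκ : κ = τ^M / (M * (1+T)^M))
    (δ : ℝ) (hδ : 0 < δ) (hδ1 : 4 * T * δ ≤ 1) (l r : ℕ) (B q : ℝ) (hB : 0 ≤ B)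
    (hq : ∀ y, δ < |y| → |y| ≤ δ * (M:ℝ)^l → ‖PP t r y‖ ≤ q)
    (mm : ℕ) (hmm : 2 * (δ * (M:ℝ)^l) ≤ mm * (κ / (2 * T^M)))
    (h : ℝ) (hh : h = δ / (4 * (M:ℝ)^(l+r))) (ε : ℝ) (hε : ε = κ/2*h^M) (H1 : 4 * B ≤ δ * (M:ℝ)^l)
    (H2 : l * ((mm+1) * (3^M * (8 * q^2 * B))) ≤ δ * (M:ℝ)^l) (Q : ℕ) (hQ : 4 * B < Q * (ε^(2*l) * δ / 2)) :
    ∃ n ≤ l * Q + r, B < SS t δ n := by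
  by_contra hc
  push Not at hc
  have hδ2 : δ ≤ 1 := by nlinarith
  have hη : 0 ≤ ε^(2*l) * δ / 2 := by
    rw [pow_mul]; positivity
  have := pigeon hM t T hT1 hT δ hδ hδ1 l (l*Q+r) Q (by omega) (ε^(2*l) * δ / 2) hη ?_
  · linarith [hc (l*Q+r) le_rfl]
  · intro i hi
    have hle : l * i + l ≤ l * Q := by
      calc l * i + l = l * (i+1) := by ring
        _ ≤ _ := Nat.mul_le_mul_left _ hi
    obtain ⟨a, ha⟩ : ∃ a, l * Q + r - l * i = l + (r + a) := ⟨l * Q + r - l * i - l - r, by omega⟩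
    rw [ha]
    exact E_main hM t T hT1 hT τ hτ hτ1 i0 hi0 κ hκ δ hδ hδ2 l r a B q hB hq (hc _ (by omega)) (hc _ (by omega)) mm hmm h hh ε hε H1 H2

end Fav

namespace Fav

noncomputable def pr (θ : ℝ) (z : ℂ) : ℝ := z.re * Real.cos θ + z.im * Real.sin θ

lemma pr_eq (θ : ℝ) (z : ℂ) : (Complex.exp (-(θ : ℂ) * Complex.I) * z).re = pr θ z := by
  rw [← Complex.ofReal_neg, Complex.mul_re, Complex.exp_ofReal_mul_I_re, Complex.exp_ofReal_mul_I_im, Real.cos_neg, Real.sin_neg]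
  unfold pr
  ring

lemma vol_diam (S : Set ℝ) (D : ℝ) (h : ∀ x ∈ S, ∀ y ∈ S, |x - y| ≤ D) : volume S ≤ ENNReal.ofReal (2 * D) := by
  rcases S.eq_empty_or_nonempty with rfl | ⟨x, hx⟩
  · simp
  have : S ⊆ {y | |y - x| ≤ D} := fun y hy => h y hy x hx
  exact (measure_mono this).trans (vol_abs x D).le

lemma vol_sin_half (a : ℝ) (S : Set ℝ) (hS : S ⊆ Set.Icc a (a + Real.pi/2)) (D : ℝ)
    (h : ∀ x ∈ S, ∀ y ∈ S, |Real.sin (x - y)| ≤ D) : volume S ≤ ENNReal.ofReal (Real.pi * D) := by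
  have hpi := Real.pi_pos
  have := vol_diam S (Real.pi * D / 2) ?_
  · convert this using 2; ring
  have key : ∀ x ∈ S, ∀ y ∈ S, x ≤ y → y - x ≤ Real.pi * D / 2 := by
    intro x hx y hy hxy
    have h1 := Real.mul_le_sin (x := y - x) (by linarith) (by linarith [(hS hx).1, (hS hy).2])
    have h2 := (le_abs_self _).trans (h y hy x hx)
    have h3 : 2 / Real.pi * (y - x) ≤ D := h1.trans h2
    rw [div_mul_eq_mul_div, div_le_iff₀ hpi] at h3
    linarith
  intro x hx y hy
  rcases le_total x y with hxy | hxy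
  · rw [abs_sub_comm, abs_of_nonneg (by linarith)]; exact key x hx y hy hxy
  · rw [abs_of_nonneg (by linarith)]; exact key y hy x hx hxy

lemma vol_sin (S : Set ℝ) (hS : S ⊆ Set.Icc 0 Real.pi) (D : ℝ)
    (h : ∀ x ∈ S, ∀ y ∈ S, |Real.sin (x - y)| ≤ D) : volume S ≤ ENNReal.ofReal (2 * Real.pi * D) := by
  rcases S.eq_empty_or_nonempty with rfl | ⟨x, hx⟩
  · simp
  have hpi := Real.pi_pos
  have hD : 0 ≤ D := (abs_nonneg _).trans (h x hx x hx)
  have h1 := vol_sin_half 0 (S ∩ Set.Icc 0 (0 + Real.pi/2)) Set.inter_subset_right D (fun x hx y hy => h x hx.1 y hy.1)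
  have h2 := vol_sin_half (Real.pi/2) (S ∩ Set.Icc (Real.pi/2) (Real.pi/2 + Real.pi/2)) Set.inter_subset_right D (fun x hx y hy => h x hx.1 y hy.1)
  have hsub : S ⊆ (S ∩ Set.Icc 0 (0 + Real.pi/2)) ∪ (S ∩ Set.Icc (Real.pi/2) (Real.pi/2 + Real.pi/2)) := by
    intro y hy
    have := hS hy
    rcases le_total y (Real.pi/2) with c | c
    · exact Or.inl ⟨hy, this.1, by linarith⟩
    · exact Or.inr ⟨hy, c, by linarith [this.2]⟩
  calc _ ≤ _ := measure_mono hsub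
    _ ≤ _ := measure_union_le _ _
    _ ≤ _ := add_le_add h1 h2
    _ = _ := by rw [← ENNReal.ofReal_add (by positivity) (by positivity)]; congr 1; ring

lemma exc1 (d : ℂ) (hd : d ≠ 0) (τ : ℝ) :
    volume {θ | θ ∈ Set.Icc 0 Real.pi ∧ |pr θ d| < τ} ≤ ENNReal.ofReal (2 * Real.pi * (4 * τ / ‖d‖)) := by
  apply vol_sin _ (fun x hx => hx.1)
  rintro x ⟨_, hx⟩ y ⟨_, hy⟩
  have hd0 : 0 < ‖d‖ := norm_pos_iff.2 hd
  rw [le_div_iff₀ hd0]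
  have n1 := Complex.norm_le_abs_re_add_abs_im d
  have e1 : d.re * Real.sin (x - y) = pr y d * Real.sin x - pr x d * Real.sin y := by
    unfold pr; rw [Real.sin_sub]; ring
  have e2 : d.im * Real.sin (x - y) = pr x d * Real.cos y - pr y d * Real.cos x := by
    unfold pr; rw [Real.sin_sub]; ring
  have hm : ∀ u v : ℝ, |u| < τ → |v| ≤ 1 → |u * v| ≤ τ := by
    intro u v hu hv
    rw [abs_mul]
    nlinarith [abs_nonneg u, abs_nonneg v]
  have b1 : |d.re * Real.sin (x-y)| ≤ 2 * τ := by
    rw [e1]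
    refine (abs_sub _ _).trans ?_
    linarith [hm _ _ hy (Real.abs_sin_le_one x), hm _ _ hx (Real.abs_sin_le_one y)]
  have b2 : |d.im * Real.sin (x-y)| ≤ 2 * τ := by
    rw [e2]
    refine (abs_sub _ _).trans ?_
    linarith [hm _ _ hx (Real.abs_cos_le_one y), hm _ _ hy (Real.abs_cos_le_one x)]
  rw [abs_mul] at b1 b2
  nlinarith [abs_nonneg (Real.sin (x-y))]

/-! counting of itineraries -/

noncomputable def RR (M Sn : ℕ) : ℕ → ℕ → Finset (ℤ × ℤ)
  | 0, _ => (Finset.Icc (-(Sn:ℤ)) Sn) ×ˢ (Finset.Icc (-(Sn:ℤ)) Sn)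
  | k+1, 0 => (RR M Sn k 0).image fun v => (M * v.1, M * v.2)
  | k+1, j+1 => ((RR M Sn k (j+1)).image fun v => (M * v.1, M * v.2)) ∪
      ((RR M Sn k j) ×ˢ ((Finset.Icc (-(M:ℤ)) M) ×ˢ (Finset.Icc (-(M:ℤ)) M))).image
        fun v => (M * v.1.1 + v.2.1, M * v.1.2 + v.2.2)

lemma RR_card (M Sn : ℕ) (k j : ℕ) :
    ((RR M Sn k j).card : ℝ) ≤ (2*Sn+1)^2 * (4 * (2*M+1)^2)^j * (5/4)^k := by
  have hA : (1:ℝ) ≤ 4 * (2*M+1)^2 := by nlinarith [(Nat.cast_nonneg M : (0:ℝ) ≤ M)]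
  have hI : ∀ n : ℕ, (Finset.Icc (-(n:ℤ)) n).card = 2*n+1 := by
    intro n; rw [Int.card_Icc]; omega
  induction k generalizing j with
  | zero =>
    rw [RR, Finset.card_product, hI]
    push_cast
    have : (1:ℝ) ≤ (4 * (2*M+1)^2)^j := one_le_pow₀ hA
    rw [pow_zero, mul_one]
    nlinarith [sq_nonneg (2*(Sn:ℝ)+1)]
  | succ k ih =>
    cases j with
    | zero =>
      rw [RR]
      have h1 : (((RR M Sn k 0).image fun v => ((M:ℤ) * v.1, (M:ℤ) * v.2)).card : ℝ) ≤ (RR M Sn k 0).card := by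
        exact_mod_cast Finset.card_image_le
      refine h1.trans ((ih 0).trans ?_)
      gcongr
      · norm_num
      · omega
    | succ j =>
      rw [RR]
      have h1 : (((RR M Sn k (j+1)).image fun v => ((M:ℤ) * v.1, (M:ℤ) * v.2)).card : ℝ) ≤ (RR M Sn k (j+1)).card := by
        exact_mod_cast Finset.card_image_le
      have h2 : ((((RR M Sn k j) ×ˢ ((Finset.Icc (-(M:ℤ)) M) ×ˢ (Finset.Icc (-(M:ℤ)) M))).image
        fun v => ((M:ℤ) * v.1.1 + v.2.1, (M:ℤ) * v.1.2 + v.2.2)).card : ℝ) ≤ (RR M Sn k j).card * (2*M+1)^2 := by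
        have := Finset.card_image_le (s := (RR M Sn k j) ×ˢ ((Finset.Icc (-(M:ℤ)) M) ×ˢ (Finset.Icc (-(M:ℤ)) M)))
          (f := fun v => ((M:ℤ) * v.1.1 + v.2.1, (M:ℤ) * v.1.2 + v.2.2))
        rw [Finset.card_product, Finset.card_product, hI] at this
        calc _ ≤ (((RR M Sn k j).card * ((2*M+1) * (2*M+1)) : ℕ):ℝ) := by exact_mod_cast this
          _ = _ := by push_cast; ring
      have h3 := ih (j+1)
      have h4 := mul_le_mul_of_nonneg_right (ih j) (by positivity : (0:ℝ) ≤ (2*M+1)^2)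
      refine (Nat.cast_le.2 (Finset.card_union_le _ _)).trans ?_
      rw [Nat.cast_add]
      calc _ ≤ (2*Sn+1)^2 * (4 * (2*M+1)^2)^(j+1) * (5/4)^k + (2*Sn+1)^2 * (4 * (2*M+1)^2)^j * (5/4)^k * (2*(M:ℝ)+1)^2 :=
            add_le_add (h1.trans h3) (h2.trans h4)
        _ = _ := by ring

def bad (M : ℕ) (s t : ℝ) (k : ℕ) : Prop :=
  1 / (2*(M:ℝ)) ≤ |(M:ℝ)^k * s - round ((M:ℝ)^k * s)| ∨ 1 / (2*(M:ℝ)) ≤ |(M:ℝ)^k * t - round ((M:ℝ)^k * t)|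

open Classical in
noncomputable def nbad (M : ℕ) (s t : ℝ) (k : ℕ) : ℕ := ((Finset.range k).filter (bad M s t)).card

lemma round_good (M : ℕ) (hM : 2 ≤ M) (x : ℝ) (h : |x - round x| < 1 / (2*(M:ℝ))) : round ((M:ℝ) * x) = M * round x := by
  have hM0 : (0:ℝ) < M := by positivity
  rw [lt_div_iff₀ (by positivity)] at h
  have h1 : |(M:ℝ) * x - M * round x| < 1/2 := by
    rw [← mul_sub, abs_mul, abs_of_pos hM0]; linarith
  have h2 := abs_lt.1 h1
  rw [round_eq, Int.floor_eq_iff]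
  push_cast
  constructor <;> linarith

lemma round_bad (M : ℕ) (hM : 2 ≤ M) (x : ℝ) : ∃ d ∈ Finset.Icc (-(M:ℤ)) M, round ((M:ℝ) * x) = M * round x + d := by
  have hM0 : (2:ℝ) ≤ M := by exact_mod_cast hM
  refine ⟨round ((M:ℝ) * x) - M * round x, ?_, by ring⟩
  have h1 := abs_le.1 (abs_sub_round x)
  have h2 := abs_le.1 (abs_sub_round ((M:ℝ) * x))
  rw [Finset.mem_Icc]
  constructor
  · have : (-(M:ℝ)) ≤ round ((M:ℝ) * x) - M * round x := by nlinarith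
    exact_mod_cast this
  · have : (round ((M:ℝ) * x) - M * round x : ℝ) ≤ M := by nlinarith
    exact_mod_cast this

lemma reach (M : ℕ) (hM : 2 ≤ M) (Sn : ℕ) (s t : ℝ) (hs : |s| + 1/2 ≤ Sn) (ht : |t| + 1/2 ≤ Sn) (k j : ℕ) (hj : nbad M s t k ≤ j) :
    (round ((M:ℝ)^k * s), round ((M:ℝ)^k * t)) ∈ RR M Sn k j := by
  classical
  induction k generalizing j with
  | zero =>
    have key : ∀ s : ℝ, |s| + 1/2 ≤ Sn → round s ∈ Finset.Icc (-(Sn:ℤ)) Sn := by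
      intro s hs
      have h1 := abs_le.1 (abs_sub_round s)
      have h2 := abs_le.1 (le_refl |s|)
      rw [Finset.mem_Icc]
      constructor
      · have : (-(Sn:ℝ)) ≤ round s := by linarith
        exact_mod_cast this
      · have : (round s : ℝ) ≤ Sn := by linarith
        exact_mod_cast this
    rw [RR]
    simp only [pow_zero, one_mul, Finset.mem_product]
    exact ⟨key s hs, key t ht⟩
  | succ k ih =>
    have e : ∀ s : ℝ, (M:ℝ)^(k+1) * s = M * ((M:ℝ)^k * s) := fun s => by ring
    rw [e, e]
    by_cases hb : bad M s t k
    · have hc : nbad M s t (k+1) = nbad M s t k + 1 := by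
        unfold nbad
        rw [Finset.range_add_one, Finset.filter_insert, if_pos hb, Finset.card_insert_of_notMem (by simp)]
      obtain ⟨j', rfl⟩ : ∃ j', j = j' + 1 := ⟨j - 1, by omega⟩
      have h1 := ih j' (by omega)
      rw [RR]
      apply Finset.mem_union_right
      rw [Finset.mem_image]
      obtain ⟨d1, hd1, e1⟩ := round_bad M hM ((M:ℝ)^k * s)
      obtain ⟨d2, hd2, e2⟩ := round_bad M hM ((M:ℝ)^k * t)
      refine ⟨((round ((M:ℝ)^k * s), round ((M:ℝ)^k * t)), (d1, d2)), ?_, by rw [e1, e2]⟩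
      exact Finset.mem_product.2 ⟨h1, Finset.mem_product.2 ⟨hd1, hd2⟩⟩
    · have hc : nbad M s t (k+1) = nbad M s t k := by
        unfold nbad
        rw [Finset.range_add_one, Finset.filter_insert, if_neg hb]
      have h1 := ih j (by omega)
      unfold bad at hb
      push Not at hb
      have h2 : (round ((M:ℝ) * ((M:ℝ)^k * s)), round ((M:ℝ) * ((M:ℝ)^k * t))) ∈ (RR M Sn k j).image fun v => ((M:ℤ) * v.1, (M:ℤ) * v.2) := by
        rw [Finset.mem_image]
        exact ⟨_, h1, by rw [round_good M hM _ hb.1, round_good M hM _ hb.2]⟩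
      cases j with
      | zero => rw [RR]; exact h2
      | succ j => rw [RR]; exact Finset.mem_union_left _ h2

lemma vol_pq (M : ℕ) (hM : 2 ≤ M) (a b : ℂ) (hdet : a.re * b.im - a.im * b.re ≠ 0) (δ : ℝ) (hδ : 0 < δ) (r : ℕ) (p q : ℤ) :
    volume {θ | θ ∈ Set.Icc 0 Real.pi ∧ ∃ x, δ ≤ x ∧ round ((M:ℝ)^r * (x * pr θ a / (2*Real.pi))) = p
      ∧ round ((M:ℝ)^r * (x * pr θ b / (2*Real.pi))) = q} ≤
    ENNReal.ofReal (2 * Real.pi * ((2*Real.pi * (2 * (‖a‖ + ‖b‖))) / (|a.re * b.im - a.im * b.re| * δ) / (M:ℝ)^r)) := by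
  apply vol_sin _ (fun x hx => hx.1)
  rintro θ ⟨_, x, hx, h1, h2⟩ θ' ⟨_, x', hx', h1', h2'⟩
  have hpi := Real.pi_pos
  have hMr : (0:ℝ) < (M:ℝ)^r := by positivity
  set Δ := a.re * b.im - a.im * b.re with hΔ
  have hΔ0 : 0 < |Δ| := abs_pos.2 hdet
  have close : ∀ (z : ℂ) (p : ℤ), round ((M:ℝ)^r * (x * pr θ z / (2*Real.pi))) = p → round ((M:ℝ)^r * (x' * pr θ' z / (2*Real.pi))) = p →
      |x * pr θ z - x' * pr θ' z| ≤ 2*Real.pi / (M:ℝ)^r := by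
    intro z p e e'
    have a1 := abs_le.1 (abs_sub_round ((M:ℝ)^r * (x * pr θ z / (2*Real.pi))))
    have a2 := abs_le.1 (abs_sub_round ((M:ℝ)^r * (x' * pr θ' z / (2*Real.pi))))
    rw [e] at a1
    rw [e'] at a2
    have : |((M:ℝ)^r * (x * pr θ z / (2*Real.pi))) - ((M:ℝ)^r * (x' * pr θ' z / (2*Real.pi)))| ≤ 1 := by
      rw [abs_le]; constructor <;> linarith
    rw [← mul_sub, ← sub_div, abs_mul, abs_div, abs_of_pos hMr, abs_of_pos (by positivity : 0 < 2 * Real.pi), mul_div_assoc', div_le_one (by positivity)] at this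
    rw [le_div_iff₀ hMr]; linarith
  have ca := close a p h1 h1'
  have cb := close b q h2 h2'
  set ρ := 2*Real.pi / (M:ℝ)^r with hρ
  have hρ0 : 0 < ρ := by positivity
  set w1 := x * Real.cos θ - x' * Real.cos θ' with hw1
  set w2 := x * Real.sin θ - x' * Real.sin θ' with hw2
  have ea : x * pr θ a - x' * pr θ' a = a.re * w1 + a.im * w2 := by unfold pr; rw [hw1, hw2]; ring
  have eb : x * pr θ b - x' * pr θ' b = b.re * w1 + b.im * w2 := by unfold pr; rw [hw1, hw2]; ring
  rw [ea] at ca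
  rw [eb] at cb
  have mulle : ∀ u v : ℝ, ∀ c, |u| ≤ ρ → |v| ≤ c → |u * v| ≤ ρ * c := by
    intro u v c hu hv
    rw [abs_mul]
    exact mul_le_mul hu hv (abs_nonneg _) hρ0.le
  have bw1 : |Δ| * |w1| ≤ ρ * (‖a‖ + ‖b‖) := by
    rw [← abs_mul, show Δ * w1 = (a.re * w1 + a.im * w2) * b.im - (b.re * w1 + b.im * w2) * a.im by rw [hΔ]; ring]
    refine (abs_sub _ _).trans ?_
    linarith [mulle _ _ _ ca (Complex.abs_im_le_norm b), mulle _ _ _ cb (Complex.abs_im_le_norm a)]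
  have bw2 : |Δ| * |w2| ≤ ρ * (‖a‖ + ‖b‖) := by
    rw [← abs_mul, show Δ * w2 = (b.re * w1 + b.im * w2) * a.re - (a.re * w1 + a.im * w2) * b.re by rw [hΔ]; ring]
    refine (abs_sub _ _).trans ?_
    linarith [mulle _ _ _ ca (Complex.abs_re_le_norm b), mulle _ _ _ cb (Complex.abs_re_le_norm a)]
  have hx0 : 0 < x := by linarith
  have e3 : x * Real.sin (θ - θ') = w2 * Real.cos θ' - w1 * Real.sin θ' := by
    rw [Real.sin_sub, hw1, hw2]; ring
  have b3 : x * |Real.sin (θ - θ')| ≤ |w2| + |w1| := by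
    have e7 : x * |Real.sin (θ - θ')| = |x * Real.sin (θ - θ')| := by rw [abs_mul, abs_of_pos hx0]
    rw [e7, e3]
    refine (abs_sub _ _).trans ?_
    rw [abs_mul, abs_mul]
    nlinarith [abs_nonneg w1, abs_nonneg w2, Real.abs_cos_le_one θ', Real.abs_sin_le_one θ']
  have b4 : δ * |Real.sin (θ - θ')| ≤ |w2| + |w1| := by nlinarith [abs_nonneg (Real.sin (θ-θ'))]
  have b5 : |Real.sin (θ - θ')| * (|Δ| * δ) ≤ ρ * (2 * (‖a‖ + ‖b‖)) := by nlinarith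
  rw [div_div, le_div_iff₀ (by positivity)]
  have e6 : 2 * Real.pi = ρ * (M:ℝ)^r := by rw [hρ]; field_simp
  rw [e6]
  nlinarith [mul_le_mul_of_nonneg_right b5 hMr.le]

lemma exc2 (M : ℕ) (hM : 3 ≤ M) (a b : ℂ) (hdet : a.re * b.im - a.im * b.re ≠ 0) (δ : ℝ) (hδ : 0 < δ) :
    ∃ C : ℝ, 0 < C ∧ ∀ l J : ℕ, volume {θ | θ ∈ Set.Icc 0 Real.pi ∧ ∃ x, δ ≤ x ∧ x ≤ δ * (M:ℝ)^(l+1) ∧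
      nbad M (x * pr θ a / (2*Real.pi)) (x * pr θ b / (2*Real.pi)) (24*J) ≤ J} ≤ ENNReal.ofReal (C * (M:ℝ)^(2*l) / (M:ℝ)^(12*J)) := by
  have hpi := Real.pi_pos
  have hM2 : 2 ≤ M := by omega
  have hM3 : (3:ℝ) ≤ M := by exact_mod_cast hM
  have hΔ0 : 0 < |a.re * b.im - a.im * b.re| := abs_pos.2 hdet
  set D : ℝ := 2 * Real.pi * ((2*Real.pi * (2 * (‖a‖ + ‖b‖))) / (|a.re * b.im - a.im * b.re| * δ)) with hD
  have hD0 : 0 ≤ D := by positivity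
  obtain ⟨S1, hS1⟩ := exists_nat_ge (δ * M * (‖a‖ + ‖b‖) + 1)
  have hS10 : (1:ℝ) ≤ S1 := le_trans (by
    have : 0 ≤ δ * M * (‖a‖ + ‖b‖) := by positivity
    linarith) hS1
  refine ⟨(3*S1)^2 * (D+1), by positivity, ?_⟩
  intro l J
  have hMl : (1:ℝ) ≤ (M:ℝ)^l := one_le_pow₀ (by linarith)
  have prle : ∀ θ z, |pr θ z| ≤ 2 * ‖z‖ := by
    intro θ z
    unfold pr
    refine (abs_add_le _ _).trans ?_
    rw [abs_mul, abs_mul]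
    nlinarith [Complex.abs_re_le_norm z, Complex.abs_im_le_norm z, abs_nonneg z.re, abs_nonneg z.im, Real.abs_cos_le_one θ, Real.abs_sin_le_one θ]
  have hsub : {θ | θ ∈ Set.Icc 0 Real.pi ∧ ∃ x, δ ≤ x ∧ x ≤ δ * (M:ℝ)^(l+1) ∧
      nbad M (x * pr θ a / (2*Real.pi)) (x * pr θ b / (2*Real.pi)) (24*J) ≤ J} ⊆
      ⋃ v ∈ RR M (S1 * M^l) (24*J) J, {θ | θ ∈ Set.Icc 0 Real.pi ∧ ∃ x, δ ≤ x ∧ round ((M:ℝ)^(24*J) * (x * pr θ a / (2*Real.pi))) = v.1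
      ∧ round ((M:ℝ)^(24*J) * (x * pr θ b / (2*Real.pi))) = v.2} := by
    rintro θ ⟨hθ, x, hx1, hx2, hn⟩
    have hsz : ∀ z : ℂ, ‖z‖ ≤ ‖a‖ + ‖b‖ → |x * pr θ z / (2*Real.pi)| + 1/2 ≤ ((S1 * M^l : ℕ):ℝ) := by
      intro z hz
      have hx0 : 0 < x := by linarith
      rw [abs_div, abs_mul, abs_of_pos hx0, abs_of_pos (by positivity : 0 < 2 * Real.pi)]
      have h1 : x * |pr θ z| / (2 * Real.pi) ≤ δ * (M:ℝ)^(l+1) * (‖a‖ + ‖b‖) := by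
        rw [div_le_iff₀ (by positivity)]
        have h2 : x * |pr θ z| ≤ δ * (M:ℝ)^(l+1) * (2 * (‖a‖ + ‖b‖)) := by
          apply mul_le_mul hx2 _ (abs_nonneg _) (by positivity)
          linarith [prle θ z]
        have h3 : 0 ≤ δ * (M:ℝ)^(l+1) * (‖a‖ + ‖b‖) := by positivity
        nlinarith [Real.pi_gt_three]
      push_cast
      have h4 := mul_le_mul_of_nonneg_right hS1 (by positivity : (0:ℝ) ≤ (M:ℝ)^l)
      have h5 : δ * (M:ℝ)^(l+1) * (‖a‖ + ‖b‖) = δ * M * (‖a‖ + ‖b‖) * (M:ℝ)^l := by ring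
      linarith
    have := reach M hM2 (S1 * M^l) _ _ (hsz a (by linarith [norm_nonneg b])) (hsz b (by linarith [norm_nonneg a])) (24*J) J hn
    simp only [Set.mem_iUnion]
    exact ⟨_, this, hθ, x, hx1, rfl, rfl⟩
  have hcard := RR_card M (S1 * M^l) (24*J) J
  have hc1 : (2 * ((S1 * M^l : ℕ):ℝ) + 1)^2 ≤ (3*S1)^2 * (M:ℝ)^(2*l) := by
    push_cast
    have h1 : 2 * (S1 * (M:ℝ)^l) + 1 ≤ 3 * S1 * (M:ℝ)^l := by nlinarith
    calc _ ≤ (3 * S1 * (M:ℝ)^l)^2 := by gcongr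
      _ = _ := by ring
  have hc2 : (4 * (2*(M:ℝ)+1)^2)^J ≤ (M:ℝ)^(6*J) := by
    rw [pow_mul]
    gcongr
    have h1 : 2*(M:ℝ)+1 ≤ M^2 := by nlinarith
    have h2 : (2*(M:ℝ)+1)^2 ≤ (M^2)^2 := by gcongr
    have h3 : (0:ℝ) ≤ (M:ℝ)^4 := by positivity
    nlinarith [mul_le_mul_of_nonneg_right (by nlinarith : (4:ℝ) ≤ (M:ℝ)^2) h3]
  have hc3 : ((5:ℝ)/4)^(24*J) ≤ (M:ℝ)^(6*J) := by
    rw [show 24*J = 4*(6*J) by ring, pow_mul]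
    gcongr
    norm_num
    linarith
  have hcard2 : ((RR M (S1 * M^l) (24*J) J).card : ℝ) ≤ (3*S1)^2 * (M:ℝ)^(2*l) * (M:ℝ)^(12*J) := by
    refine hcard.trans ?_
    calc _ ≤ ((3*S1)^2 * (M:ℝ)^(2*l)) * (M:ℝ)^(6*J) * (M:ℝ)^(6*J) := by gcongr
      _ = _ := by ring
  calc _ ≤ _ := measure_mono hsub
    _ ≤ _ := measure_biUnion_finset_le _ _
    _ ≤ ∑ v ∈ RR M (S1 * M^l) (24*J) J, ENNReal.ofReal (D / (M:ℝ)^(24*J)) := by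
        refine Finset.sum_le_sum fun v _ => ?_
        refine (vol_pq M hM2 a b hdet δ hδ (24*J) v.1 v.2).trans (le_of_eq ?_)
        congr 1
        rw [hD]; ring
    _ = ENNReal.ofReal ((RR M (S1 * M^l) (24*J) J).card * (D / (M:ℝ)^(24*J))) := by
        rw [Finset.sum_const, nsmul_eq_mul, ← ENNReal.ofReal_natCast, ← ENNReal.ofReal_mul (by positivity)]
    _ ≤ _ := by
        apply ENNReal.ofReal_le_ofReal
        calc _ ≤ ((3*S1)^2 * (M:ℝ)^(2*l) * (M:ℝ)^(12*J)) * ((D+1) / (M:ℝ)^(24*J)) := by gcongr; linarith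
          _ = _ := by
            rw [show 24*J = 12*J+12*J by ring, pow_add]
            field_simp

/-! gain at bad indices -/

lemma phi_bad (M : ℕ) (hM : 3 ≤ M) : ∃ σ : ℝ, 0 < σ ∧ σ < 1 ∧ ∀ (t : Fin M → ℝ) (i j : Fin M) (_ : i ≠ j) (u : ℝ)
    (_ : 1 / (2*(M:ℝ)) ≤ |u * (t j - t i) / (2*Real.pi) - round (u * (t j - t i) / (2*Real.pi))|), ‖phi t u‖ ≤ σ := by
  have hpi := Real.pi_pos
  have hM3 : (3:ℝ) ≤ M := by exact_mod_cast hM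
  set γ : ℝ := 1 / (2*(M:ℝ)) with hγ
  have hγ0 : 0 < γ := by positivity
  have hγ1 : γ ≤ 1/6 := by rw [hγ]; gcongr; linarith
  have hcos : Real.cos (2*Real.pi*γ) < 1 := by
    rw [← Real.cos_zero]
    exact Real.cos_lt_cos_of_nonneg_of_le_pi le_rfl (by nlinarith) (by positivity)
  set ρ := Real.sqrt (2 + 2 * Real.cos (2*Real.pi*γ)) with hρ
  have hρ2 : ρ < 2 := by
    rw [hρ, Real.sqrt_lt' (by norm_num)]; linarith
  have hρ0 : 0 ≤ ρ := Real.sqrt_nonneg _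
  refine ⟨(M - 2 + ρ)/M, by apply div_pos <;> linarith, by rw [div_lt_one (by linarith)]; linarith, ?_⟩
  intro t i j hij u hu
  unfold phi
  have h2 : ‖1 / (M:ℂ)‖ = 1 / M := by simp
  rw [norm_mul, h2, div_mul_eq_mul_div, one_mul]
  gcongr
  have hji : j ∈ Finset.univ.erase i := by simp [hij.symm]
  rw [← Finset.add_sum_erase _ _ (Finset.mem_univ i), ← Finset.add_sum_erase _ _ hji, ← add_assoc]
  refine (norm_add_le _ _).trans ?_
  have b1 : ‖∑ k ∈ (Finset.univ.erase i).erase j, Complex.exp ((u * t k : ℝ) * Complex.I)‖ ≤ M - 2 := by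
    refine (norm_sum_le _ _).trans ?_
    simp_rw [Complex.norm_exp_ofReal_mul_I]
    rw [Finset.sum_const, Finset.card_erase_of_mem hji, Finset.card_erase_of_mem (Finset.mem_univ i)]
    simp
    rw [Nat.cast_sub (by omega), Nat.cast_sub (by omega)]
    push_cast; linarith
  have b2 : ‖Complex.exp ((u * t i : ℝ) * Complex.I) + Complex.exp ((u * t j : ℝ) * Complex.I)‖ ≤ ρ := by
    rw [hρ]
    apply Real.le_sqrt_of_sq_le
    rw [Complex.sq_norm, Complex.normSq_apply]
    simp only [Complex.add_re, Complex.add_im, Complex.exp_ofReal_mul_I_re, Complex.exp_ofReal_mul_I_im]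
    set s := u * (t j - t i) / (2*Real.pi) with hs
    have e1 : Real.cos (u * t j - u * t i) = Real.cos (2*Real.pi*|s - round s|) := by
      rw [← Real.cos_abs (2*Real.pi*|s - round s|), abs_mul, abs_abs, ← abs_mul, Real.cos_abs]
      have : u * t j - u * t i = 2*Real.pi*(s - round s) + (round s) * (2*Real.pi) := by
        rw [hs]; field_simp; ring
      rw [this, Real.cos_add_int_mul_two_pi]
    have e2 : Real.cos (2*Real.pi*|s - round s|) ≤ Real.cos (2*Real.pi*γ) := by
      apply Real.cos_le_cos_of_nonneg_of_le_pi (by positivity)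
      · have := abs_sub_round s
        nlinarith
      · gcongr
    rw [← e1, Real.cos_sub] at e2
    nlinarith [Real.sin_sq_add_cos_sq (u * t i), Real.sin_sq_add_cos_sq (u * t j)]
  linarith

lemma PP_bad {M : ℕ} (hM : 3 ≤ M) (σ : ℝ) (hσ0 : 0 < σ) (hσ1 : σ < 1) (hσ : ∀ (t : Fin M → ℝ) (i j : Fin M) (_ : i ≠ j) (u : ℝ)
    (_ : 1 / (2*(M:ℝ)) ≤ |u * (t j - t i) / (2*Real.pi) - round (u * (t j - t i) / (2*Real.pi))|), ‖phi t u‖ ≤ σ)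
    (t : Fin M → ℝ) (i j k : Fin M) (hij : i ≠ j) (hik : i ≠ k) (y : ℝ) (r J : ℕ)
    (hb : J < nbad M ((M * y) * (t j - t i) / (2*Real.pi)) ((M * y) * (t k - t i) / (2*Real.pi)) r) :
    ‖PP t r y‖ ≤ σ^J := by
  classical
  unfold PP
  rw [norm_prod]
  unfold nbad at hb
  set S := (Finset.range r).filter (bad M ((M * y) * (t j - t i) / (2*Real.pi)) ((M * y) * (t k - t i) / (2*Real.pi))) with hS
  calc _ ≤ ∏ m ∈ S, ‖phi t ((M:ℝ)^(m+1) * y)‖ := by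
        rw [← Finset.prod_filter_mul_prod_filter_not (Finset.range r) (bad M ((M * y) * (t j - t i) / (2*Real.pi)) ((M * y) * (t k - t i) / (2*Real.pi)))]
        apply mul_le_of_le_one_right (Finset.prod_nonneg fun _ _ => norm_nonneg _)
        exact Finset.prod_le_one (fun _ _ => norm_nonneg _) fun _ _ => phi_le _ _
    _ ≤ ∏ m ∈ S, σ := by
        refine Finset.prod_le_prod (fun _ _ => norm_nonneg _) fun m hm => ?_
        have hbad := (Finset.mem_filter.1 hm).2
        have e : ∀ d, (M:ℝ)^m * ((M * y) * d / (2*Real.pi)) = ((M:ℝ)^(m+1) * y) * d / (2*Real.pi) := fun d => by ring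
        unfold bad at hbad
        rw [e, e] at hbad
        rcases hbad with h | h
        · exact hσ t i j hij _ h
        · exact hσ t i k hik _ h
    _ = σ^S.card := by simp
    _ ≤ σ^J := pow_le_pow_of_le_one hσ0.le hσ1.le hb.le

lemma phi_neg {M : ℕ} (t : Fin M → ℝ) (u : ℝ) : ‖phi t (-u)‖ = ‖phi t u‖ := by
  have : phi t (-u) = (starRingEnd ℂ) (phi t u) := by
    unfold phi
    simp only [map_mul, map_div₀, map_one, map_natCast, map_sum, ← Complex.exp_conj, Complex.conj_ofReal, Complex.conj_I]
    congr 1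
    refine Finset.sum_congr rfl fun j _ => ?_
    congr 1
    push_cast; ring
  rw [this, RCLike.norm_conj]

lemma PP_neg {M : ℕ} (t : Fin M → ℝ) (r : ℕ) (y : ℝ) : ‖PP t r (-y)‖ = ‖PP t r y‖ := by
  unfold PP
  rw [norm_prod, norm_prod]
  refine Finset.prod_congr rfl fun k _ => ?_
  rw [mul_neg, phi_neg]

lemma PP_abs {M : ℕ} (t : Fin M → ℝ) (r : ℕ) (y : ℝ) : ‖PP t r |y|‖ = ‖PP t r y‖ := by
  rcases abs_choice y with h | h <;> rw [h]
  exact PP_neg t r y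

end Fav

namespace Fav

lemma ar1 (a b c x y : ℝ) (hc : 0 ≤ c) (h : a ≤ x * b) (hx : y = x * b * c) : a * c ≤ y := by
  rw [hx]; exact mul_le_mul_of_nonneg_right h hc

lemma ar2 (x y : ℝ) (hx0 : 0 ≤ x) (hx : x ≤ 1) (h : x ≤ y) : x^2 ≤ y := by nlinarith

lemma ar3 (m δ Y P Z b : ℝ) (hδ1 : δ ≤ 1) (hY : 0 ≤ Y) (hb : 1 ≤ b) (h1 : m < P + 1) (h2 : P = δ * Y * b) (h3 : Y + 2 ≤ Z) : m + 1 ≤ Z * b := by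
  have h4 : δ * Y * b ≤ 1 * Y * b := by gcongr
  have h5 : (Y + 2) * b ≤ Z * b := by gcongr
  linarith

lemma ar4 (c B0 δ a S Q E : ℝ) (hδ : 0 < δ) (hS : 0 < S) (h1 : 2 * c < a * δ^2) (h2 : a * S ≤ Q * E) (hB : B0 = c * S) : B0 < Q * (E * δ / 2) * δ := by
  have h3 := mul_lt_mul_of_pos_right h1 hS
  have h4 := mul_le_mul_of_nonneg_right h2 (show 0 ≤ δ^2 by positivity)
  rw [hB]; linarith

lemma ar5 (s a b c : ℕ) (hs : 1 ≤ s) : 5 + 2 * s + a * s + b * s^2 + c * s ≤ (7 + a + b + c) * s^2 := by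
  have s1 : s ≤ s^2 := by nlinarith
  have s2 : 1 ≤ s^2 := by nlinarith
  have s3 : a * s ≤ a * s^2 := Nat.mul_le_mul_left _ s1
  have s4 : c * s ≤ c * s^2 := Nat.mul_le_mul_left _ s1
  linarith

set_option maxHeartbeats 1000000 in
lemma params (M : ℕ) (hM : 3 ≤ M) (T R C0 σ δ : ℝ) (hT : 1 ≤ T) (hR : 1 ≤ R) (hC0 : 1 ≤ C0) (hσ0 : 0 < σ) (hσ1 : σ < 1)
    (hδ : 0 < δ) (hδ1 : δ ≤ 1) : ∃ p : ℕ, 1 ≤ p ∧ ∀ s : ℕ, 1 ≤ s → ∃ l J mm Q J' : ℕ,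
      ∀ B κ h ε : ℝ, B = C0 * (4 * R * (M:ℝ)^s) / δ → κ = (1/(M:ℝ)^s)^M / (M * (1+T)^M) →
      h = δ / (4 * (M:ℝ)^(l+24*J)) → ε = κ/2*h^M →
      4 * B ≤ δ * (M:ℝ)^l ∧ 2 * (δ * (M:ℝ)^l) ≤ mm * (κ / (2 * T^M)) ∧
      l * ((mm+1) * (3^M * (8 * (σ^J)^2 * B))) ≤ δ * (M:ℝ)^l ∧
      4 * B < Q * (ε^(2*l) * δ / 2) ∧ 2 * l + s ≤ 12 * J ∧
      (1 - 1 / (2 * (M:ℝ) * ((M^s : ℕ):ℝ) * ((l * Q + 24 * J : ℕ):ℝ)))^J' ≤ 1 / (M:ℝ)^s ∧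
      J' * (l * Q + 24 * J) ≤ M^(p*s^2) := by
  have hM3 : (3:ℝ) ≤ M := by exact_mod_cast hM
  have hM1 : (1:ℝ) < M := by linarith
  have hM1' : (1:ℝ) ≤ M := by linarith
  have hM0 : (0:ℝ) < M := by linarith
  set X : ℝ := 16 * C0 * R / δ^2 + (4 * T^M * (M * (1+T)^M) + 2) + 3^M * 8 * (4 * C0 * R / δ^2) + 4 / δ + 2 * (M * (1+T)^M)
    + 32 * C0 * R / δ^2 with hX
  obtain ⟨A, hA⟩ := pow_unbounded_of_one_lt X hM1
  have p1 : 0 ≤ 16 * C0 * R / δ^2 := by positivity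
  have p2 : 0 ≤ (4 * T^M * (M * (1+T)^M) + 2) := by positivity
  have p3 : 0 ≤ 3^M * 8 * (4 * C0 * R / δ^2) := by positivity
  have p4 : 0 ≤ 4 / δ := by positivity
  have p5 : 0 ≤ 2 * (M * (1+T)^M) := by positivity
  have p6 : 0 ≤ 32 * C0 * R / δ^2 := by positivity
  obtain ⟨e, he⟩ := exists_pow_lt_of_lt_one (show (0:ℝ) < 1 / M by positivity) hσ1
  have he1 : 1 ≤ e := by
    by_contra h0
    have : e = 0 := by omega
    subst this
    rw [pow_zero, lt_div_iff₀ hM0] at he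
    linarith
  set d := A + M + (A+1) + A + 1 with hd
  set g := A + M + M * (A + (A + 1) + 24*e*d) with hg
  refine ⟨7 + 4*(A+1) + 4*g*(A+1) + 48*e*d, by omega, ?_⟩
  intro s hs
  have hAs : X < (M:ℝ)^(A*s) := hA.trans_le (pow_le_pow_right₀ hM1' (Nat.le_mul_of_pos_right _ hs))
  set l := (A+1)*s with hl
  set J := e*d*s with hJ
  set r := 24*J with hr
  set κ : ℝ := (1/(M:ℝ)^s)^M / (M * (1+T)^M) with hκ
  have hκ0 : 0 < κ := by positivity
  have hκ' : κ = ((M:ℝ)^(s*M))⁻¹ / (M * (1+T)^M) := by rw [hκ, one_div, inv_pow, ← pow_mul]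
  set mm := ⌈2 * (δ * (M:ℝ)^l) / (κ / (2 * T^M))⌉₊ with hmm
  set Q := M^((A+1)*s + 2*g*(A+1)*s^2) with hQ
  have hpow : ∀ k : ℕ, (k:ℝ) ≤ (M:ℝ)^k := fun k => by
    have := (Nat.lt_pow_self (n := k) (show 1 < M by omega)).le
    exact_mod_cast this
  have hpowN : ∀ k : ℕ, k ≤ M^k := fun k => (Nat.lt_pow_self (n := k) (show 1 < M by omega)).le
  set N := l * Q + r with hN
  refine ⟨l, J, mm, Q, 2 * M * M^s * N * (s * M), ?_⟩
  rintro B κ' h ε hB rfl hh hε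
  rw [← hr] at hh
  have hl1 : 1 ≤ l := Nat.mul_pos (by omega) hs
  have hB0 : 0 ≤ B := by rw [hB]; positivity
  have hlM : (M:ℝ)^l = (M:ℝ)^(A*s) * (M:ℝ)^s := by rw [hl, ← pow_add]; ring_nf
  have hs0 : (0:ℝ) < (M:ℝ)^s := by positivity
  have hN1 : 1 ≤ N := by
    have : 1 ≤ Q := Nat.one_le_pow _ _ (by omega)
    exact (Nat.mul_pos hl1 this).trans_le (Nat.le_add_right _ _)
  refine ⟨?_, ?_, ?_, ?_, ?_, ?_, ?_⟩
  · have : 16 * C0 * R / δ^2 ≤ (M:ℝ)^(A*s) := by linarith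
    rw [div_le_iff₀ (by positivity)] at this
    rw [hB, hlM, ← mul_div_assoc, div_le_iff₀ hδ]
    calc 4 * (C0 * (4 * R * (M:ℝ)^s)) = (16 * C0 * R) * (M:ℝ)^s := by ring
      _ ≤ _ := ar1 _ (δ^2) _ _ _ hs0.le this (by ring)
  · rw [← div_le_iff₀ (by positivity)]
    exact Nat.le_ceil _
  · have a1 : (mm:ℝ) + 1 ≤ (M:ℝ)^(A*s) * ((M:ℝ)^(s*M) * (M:ℝ)^l) := by
      have b1 : (mm:ℝ) < 2 * (δ * (M:ℝ)^l) / (κ / (2 * T^M)) + 1 := Nat.ceil_lt_add_one (by positivity)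
      have b2 : 2 * (δ * (M:ℝ)^l) / (κ / (2 * T^M)) = δ * (4 * T^M * (M * (1+T)^M)) * ((M:ℝ)^(s*M) * (M:ℝ)^l) := by
        rw [hκ']; field_simp; ring
      have b3 : (4 * T^M * (M * (1+T)^M) + 2) ≤ (M:ℝ)^(A*s) := by linarith
      have b4 : 1 ≤ ((M:ℝ)^(s*M) * (M:ℝ)^l) := one_le_mul_of_one_le_of_one_le (one_le_pow₀ hM1') (one_le_pow₀ hM1')
      have h9 := ar3 mm δ _ _ _ _ hδ1 (by positivity) b4 b1 b2 b3
      exact h9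
    have a2 : (σ^J)^2 ≤ ((M:ℝ)^(d*s))⁻¹ := by
      have c1 : σ^J ≤ ((M:ℝ)^(d*s))⁻¹ := by
        rw [hJ, mul_assoc, pow_mul]
        calc (σ^e)^(d*s) ≤ (1/(M:ℝ))^(d*s) := pow_le_pow_left₀ (by positivity) he.le _
          _ = _ := by rw [one_div, inv_pow]
      have c2 : σ^J ≤ 1 := pow_le_one₀ hσ0.le hσ1.le
      have c3 : 0 ≤ σ^J := by positivity
      exact ar2 _ _ c3 c2 c1
    have a3 : 3^M * 8 * (4 * C0 * R / δ^2) ≤ (M:ℝ)^(A*s) := by linarith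
    have a4 : (l:ℝ) ≤ (M:ℝ)^l := hpow l
    have a5 : (l:ℝ) * ((mm+1) * (3^M * (8 * (σ^J)^2 * B))) = δ * (l * ((mm+1) * ((σ^J)^2 * ((3^M * 8 * (4 * C0 * R / δ^2)) * (M:ℝ)^s)))) := by
      rw [hB]; field_simp
    rw [a5]
    apply mul_le_mul_of_nonneg_left _ hδ.le
    calc (l * ((mm+1) * ((σ^J)^2 * ((3^M * 8 * (4 * C0 * R / δ^2)) * (M:ℝ)^s))) : ℝ)
        ≤ (M:ℝ)^l * (((M:ℝ)^(A*s) * ((M:ℝ)^(s*M) * (M:ℝ)^l)) * (((M:ℝ)^(d*s))⁻¹ * ((M:ℝ)^(A*s) * (M:ℝ)^s))) := by gcongr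
      _ = (M:ℝ)^l := by
        have : (M:ℝ)^(d*s) = (M:ℝ)^(A*s) * ((M:ℝ)^(s*M) * (M:ℝ)^l) * ((M:ℝ)^(A*s) * (M:ℝ)^s) := by
          simp only [← pow_add]; congr 1; rw [hd, hl]; ring
        rw [this]; field_simp
  · have b1 : ((M:ℝ)^((A + (A+1) + 24*e*d)*s))⁻¹ ≤ h := by
      have : 4 / δ ≤ (M:ℝ)^(A*s) := by linarith
      rw [div_le_iff₀ hδ] at this
      rw [hh, inv_eq_one_div, div_le_div_iff₀ (by positivity) (by positivity), one_mul]
      have e1 : (M:ℝ)^((A + (A+1) + 24*e*d)*s) = (M:ℝ)^(A*s) * (M:ℝ)^(l+r) := by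
        rw [← pow_add]; congr 1; rw [hl, hr, hJ]; ring
      rw [e1]
      exact ar1 _ δ _ _ _ (by positivity) this (by ring)
    have b2 : ((M:ℝ)^((A+M)*s))⁻¹ ≤ κ/2 := by
      have : 2 * (M * (1+T)^M) ≤ (M:ℝ)^(A*s) := by linarith
      have e1 : κ/2 = ((M:ℝ)^(M*s))⁻¹ / (2 * (M * (1+T)^M)) := by
        rw [hκ', mul_comm M s]; field_simp
      rw [e1, add_mul, pow_add, mul_inv, mul_comm, div_eq_mul_inv]
      gcongr
    have b3 : ((M:ℝ)^(g*s))⁻¹ ≤ ε := by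
      have e1 : ((M:ℝ)^(g*s))⁻¹ = ((M:ℝ)^((A+M)*s))⁻¹ * (((M:ℝ)^((A + (A+1) + 24*e*d)*s))⁻¹)^M := by
        rw [inv_pow, ← mul_inv, ← pow_mul, ← pow_add, hg]; congr 2; ring
      rw [e1, hε]
      gcongr
    have b4 : ((M:ℝ)^(2*g*(A+1)*s^2))⁻¹ ≤ ε^(2*l) := by
      have e1 : ((M:ℝ)^(2*g*(A+1)*s^2))⁻¹ = (((M:ℝ)^(g*s))⁻¹)^(2*l) := by
        rw [inv_pow, ← pow_mul, hl]; congr 2; ring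
      rw [e1]
      gcongr
    have b5 : (M:ℝ)^((A+1)*s) ≤ Q * ε^(2*l) := by
      calc (M:ℝ)^((A+1)*s) = Q * ((M:ℝ)^(2*g*(A+1)*s^2))⁻¹ := by
            rw [hQ]; push_cast; rw [pow_add]; field_simp
        _ ≤ _ := by gcongr
    have b6 : 32 * C0 * R / δ^2 < (M:ℝ)^(A*s) := by
      have : 0 < 4 / δ := by positivity
      linarith
    rw [div_lt_iff₀ (by positivity)] at b6
    rw [← hl, hlM] at b5
    have b7 : 4 * B = (16 * C0 * R * (M:ℝ)^s) / δ := by rw [hB]; ring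
    rw [b7, div_lt_iff₀ hδ]
    exact ar4 (16 * C0 * R) _ δ _ _ _ _ hδ hs0 (by rw [← mul_assoc, ← mul_assoc]; norm_num; exact b6) b5 rfl
  · have : d * s ≤ J := by rw [hJ, mul_assoc]; exact Nat.le_mul_of_pos_left _ he1
    have h2 : d * s = A * s + M * s + (A+1)*s + A * s + s := by rw [hd]; ring
    omega
  · have hNr : (0:ℝ) < N := by exact_mod_cast hN1
    set D : ℝ := 2 * (M:ℝ) * ((M^s : ℕ):ℝ) * (N:ℝ) with hD
    have hMs1 : (1:ℝ) ≤ ((M^s:ℕ):ℝ) := by push_cast; exact one_le_pow₀ hM1'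
    have hNr1 : (1:ℝ) ≤ N := by exact_mod_cast hN1
    have hD1 : 1 ≤ D := by
      rw [hD]
      have := one_le_mul_of_one_le_of_one_le (one_le_mul_of_one_le_of_one_le (show (1:ℝ) ≤ 2 * M by linarith) hMs1) hNr1
      exact this
    have hD0 : 0 < D := by linarith
    have k1 : 1 - 1/D ≤ Real.exp (-(1/D)) := by linarith [Real.add_one_le_exp (-(1/D))]
    have k0 : 0 ≤ 1 - 1/D := by
      have : 1/D ≤ 1 := by rw [div_le_one hD0]; exact hD1
      linarith
    calc (1 - 1/D)^(2 * M * M^s * N * (s * M)) ≤ (Real.exp (-(1/D)))^(2 * M * M^s * N * (s * M)) := pow_le_pow_left₀ k0 k1 _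
      _ = Real.exp (-(s*M)) := by
        rw [← Real.exp_nat_mul]; congr 1
        have : (((2 * M * M^s * N * (s * M) : ℕ)):ℝ) = D * (s*M) := by rw [hD]; push_cast; ring
        rw [this]; field_simp
      _ ≤ 1/(M:ℝ)^s := by
        rw [Real.exp_neg, one_div, Real.exp_nat_mul]
        gcongr
        linarith [Real.add_one_le_exp (M:ℝ)]
  · have n1 : N ≤ M^(1 + l + ((A+1)*s + 2*g*(A+1)*s^2) + r) := by
      have q1 : l * Q ≤ M^(l + ((A+1)*s + 2*g*(A+1)*s^2) + r) := by
        rw [pow_add, pow_add]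
        calc l * Q ≤ M^l * Q := Nat.mul_le_mul_right _ (hpowN l)
          _ ≤ _ := Nat.le_mul_of_pos_right _ (by positivity)
      have q2 : r ≤ M^(l + ((A+1)*s + 2*g*(A+1)*s^2) + r) := (hpowN r).trans (Nat.pow_le_pow_right (by omega) (by omega))
      have q3 : M^(1 + l + ((A+1)*s + 2*g*(A+1)*s^2) + r) = M * M^(l + ((A+1)*s + 2*g*(A+1)*s^2) + r) := by
        rw [← pow_succ']; congr 1; ring
      rw [q3, hN]
      refine (Nat.add_le_add q1 q2).trans ?_
      rw [← two_mul]
      exact Nat.mul_le_mul_right _ (by omega)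
    set z := 1 + l + ((A+1)*s + 2*g*(A+1)*s^2) + r with hz
    calc 2 * M * M^s * N * (s * M) * N ≤ M * M * M^s * M^z * (M^s * M) * M^z := by
          gcongr
          · omega
          · exact hpowN s
      _ = M^(3 + 2*s + 2*z) := by ring
      _ ≤ _ := by
        apply Nat.pow_le_pow_right (by omega)
        have e1 : 3 + 2*s + 2*z = 5 + 2 * s + 4*(A+1)*s + 4*g*(A+1)*s^2 + 48*e*d*s := by
          rw [hz, hl, hr, hJ]; ring
        rw [e1]
        exact ar5 s _ _ _ hs

end Fav

namespace Fav

lemma pr_sub (θ : ℝ) (a b : ℂ) : pr θ (a - b) = pr θ a - pr θ b := by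
  unfold pr; simp; ring

lemma pr_le (θ : ℝ) (z : ℂ) : |pr θ z| ≤ ‖z‖ := by
  rw [← pr_eq]
  refine (Complex.abs_re_le_norm _).trans ?_
  rw [norm_mul, ← Complex.ofReal_neg, Complex.norm_exp_ofReal_mul_I, one_mul]

lemma pr_map (θ : ℝ) (M : ℕ) (z c : ℂ) : pr θ (z / (M:ℂ) + c) = pr θ c + pr θ z / M := by
  have : z / (M:ℂ) = ((1/(M:ℝ) : ℝ) : ℂ) * z := by push_cast; ring
  rw [this]
  unfold pr
  simp only [Complex.add_re, Complex.add_im, Complex.re_ofReal_mul, Complex.im_ofReal_mul]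
  ring

lemma word_near {M : ℕ} (hM : 3 ≤ M) (c : Fin M → ℂ) (T : Fin M → ℂ → ℂ) (hT : ∀ j z, T j z = z / (M : ℂ) + c j)
    (U : Set ℂ) (R : ℝ) (hU : ∀ z ∈ U, ‖z‖ ≤ R) (θ : ℝ) (n : ℕ) (w : Fin n → Fin M) (z : ℂ)
    (hz : z ∈ iterImg T U (List.ofFn w)) : |pr θ z - xw (fun j => pr θ (c j)) w| ≤ R / (M:ℝ)^n := by
  have hM0 : (0:ℝ) < M := by positivity
  induction n generalizing z with
  | zero =>
    simp only [List.ofFn_zero, iterImg] at hz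
    simp only [xw, Finset.univ_eq_empty, Finset.sum_empty, sub_zero, pow_zero, div_one]
    exact (pr_le θ z).trans (hU z hz)
  | succ n ih =>
    rw [List.ofFn_succ] at hz
    simp only [iterImg] at hz
    obtain ⟨z', hz', rfl⟩ := hz
    have h1 := ih _ z' hz'
    have h2 : xw (fun j => pr θ (c j)) w = pr θ (c (w 0)) + xw (fun j => pr θ (c j)) (fun i : Fin n => w i.succ) / M := by
      have := xw_cons (fun j => pr θ (c j)) (w 0) (fun i : Fin n => w i.succ)
      rw [← this]; congr 1
      exact (Fin.cons_self_tail w).symm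
    rw [hT, pr_map, h2, add_sub_add_left_eq_sub, ← sub_div, abs_div, abs_of_pos hM0, pow_succ, ← div_div]
    gcongr

lemma proj_sub {M : ℕ} (hM : 3 ≤ M) (c : Fin M → ℂ) (T : Fin M → ℂ → ℂ) (hT : ∀ j z, T j z = z / (M : ℂ) + c j)
    (U : Set ℂ) (R : ℝ) (hU : ∀ z ∈ U, ‖z‖ ≤ R) (θ : ℝ) (n : ℕ) :
    projDir θ (⋃ w : Fin n → Fin M, iterImg T U (List.ofFn w)) ⊆ LL (fun j => pr θ (c j)) R n := by
  classical
  rintro _ ⟨z, hz, rfl⟩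
  obtain ⟨w, hw⟩ := Set.mem_iUnion.1 hz
  have h := word_near hM c T hT U R hU θ n w z hw
  simp only [pr_eq, LL, Set.mem_ofPred_eq, cnt]
  intro h0
  have h1 := Finset.sum_eq_zero_iff.1 h0 w (Finset.mem_univ w)
  rw [if_pos h] at h1
  exact one_ne_zero h1

lemma LL_le {M : ℕ} (hM : 2 ≤ M) (t : Fin M → ℝ) (R : ℝ) (hR : ∀ j, R / M + |t j| ≤ R) (n : ℕ) :
    volume (LL t R n) ≤ ENNReal.ofReal (2 * R) := by
  rw [← vol_abs 0 R]
  apply measure_mono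
  intro x hx
  have := cnt_supp hM t R hR n x hx
  simpa using this

lemma theta_bound {M : ℕ} (hM : 3 ≤ M) (C0 : ℝ) (hC0 : 1 ≤ C0) (hUb : ∀ (M : ℕ) (_ : 2 ≤ M) (t : Fin M → ℝ) (R : ℝ) (_ : 1 ≤ R) (δ : ℝ) (_ : 0 < δ)
    (_ : δ ≤ 1/4) (n : ℕ), ENNReal.ofReal (δ * SS t δ n) ≤ ENNReal.ofReal C0 * ∫⁻ x, ((cnt t R n x : ENNReal))^2)
    (σ : ℝ) (hσ0 : 0 < σ) (hσ1 : σ < 1) (hσ : ∀ (t : Fin M → ℝ) (i j : Fin M) (_ : i ≠ j) (u : ℝ)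
    (_ : 1 / (2*(M:ℝ)) ≤ |u * (t j - t i) / (2*Real.pi) - round (u * (t j - t i) / (2*Real.pi))|), ‖phi t u‖ ≤ σ)
    (T R δ : ℝ) (hT : 1 ≤ T) (hR1 : 1 ≤ R) (hδ : 0 < δ) (hδ1 : 4 * T * δ ≤ 1)
    (n0 s l J mm Q J' : ℕ) (hs : 1 ≤ s)
    (hpar : ∀ B κ h ε : ℝ, B = C0 * (4 * R * (M:ℝ)^s) / δ → κ = (1/(M:ℝ)^s)^M / (M * (1+T)^M) →
      h = δ / (4 * (M:ℝ)^(l+24*J)) → ε = κ/2*h^M →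
      4 * B ≤ δ * (M:ℝ)^l ∧ 2 * (δ * (M:ℝ)^l) ≤ mm * (κ / (2 * T^M)) ∧
      l * ((mm+1) * (3^M * (8 * (σ^J)^2 * B))) ≤ δ * (M:ℝ)^l ∧
      4 * B < Q * (ε^(2*l) * δ / 2) ∧ 2 * l + s ≤ 12 * J ∧
      (1 - 1 / (2 * (M:ℝ) * ((M^s : ℕ):ℝ) * ((l * Q + 24 * J : ℕ):ℝ)))^J' ≤ 1 / (M:ℝ)^s ∧
      J' * (l * Q + 24 * J) ≤ n0)
    (t : Fin M → ℝ) (ht : ∀ j, |t j| ≤ T) (hRt : ∀ j, R / M + |t j| ≤ R)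
    (i0 i1 i2 : Fin M) (h01 : i0 ≠ i1) (h02 : i0 ≠ i2)
    (g1 : ∀ j ≠ i0, 1/(M:ℝ)^s ≤ |t i0 - t j|)
    (g2 : ∀ x, δ ≤ x → x ≤ δ * (M:ℝ)^(l+1) → J < nbad M (x * (t i1 - t i0) / (2*Real.pi)) (x * (t i2 - t i0) / (2*Real.pi)) (24*J))
    (n : ℕ) (hn : n0 ≤ n) : volume (LL t R n) ≤ ENNReal.ofReal (8 * R / (M:ℝ)^s) := by
  have hM3 : (3:ℝ) ≤ M := by exact_mod_cast hM
  have hM1 : (1:ℝ) ≤ M := by linarith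
  have hM0 : (0:ℝ) < M := by linarith
  have hM2 : 2 ≤ M := by omega
  obtain ⟨P1, P2, P3, P4, -, P6, P7⟩ := hpar _ _ _ _ rfl rfl rfl rfl
  have hms : (0:ℝ) < (M:ℝ)^s := by positivity
  have hms1 : (1:ℝ) ≤ (M:ℝ)^s := one_le_pow₀ hM1
  obtain ⟨m, hm, hSS⟩ := spectral hM2 t T hT ht (1/(M:ℝ)^s) (by positivity) (by rw [div_le_one hms]; exact hms1) i0 g1 _ rfl δ hδ hδ1
    l (24*J) (C0 * (4 * R * (M:ℝ)^s) / δ) (σ^J) (by positivity) (by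
      intro y hy1 hy2
      rw [← PP_abs]
      refine PP_bad hM σ hσ0 hσ1 hσ t i0 i1 i2 h01 h02 |y| (24*J) J (g2 _ ?_ ?_)
      · have : |y| ≤ M * |y| := le_mul_of_one_le_left (abs_nonneg y) hM1
        linarith
      · rw [pow_succ, ← mul_assoc, mul_comm (M:ℝ)]
        exact mul_le_mul_of_nonneg_right hy2 hM0.le) mm P2 _ rfl _ rfl P1 P3 Q P4
  have hE : ENNReal.ofReal (4 * R * (M^s : ℕ)) < ∫⁻ x, ((cnt t R m x : ENNReal))^2 := by
    have h1 := hUb M hM2 t R hR1 δ hδ (by nlinarith) m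
    rw [div_lt_iff₀ hδ, mul_comm (SS t δ m)] at hSS
    have h2 : ENNReal.ofReal (C0 * (4 * R * (M:ℝ)^s)) < ENNReal.ofReal (δ * SS t δ m) := by
      rw [ENNReal.ofReal_lt_ofReal_iff_of_nonneg (by positivity)]; exact hSS
    have h3 := h2.trans_le h1
    rw [ENNReal.ofReal_mul (by positivity)] at h3
    push_cast
    exact lt_of_mul_lt_mul_left' h3
  have h5 := LL_small hM2 t R (by linarith) hRt (M^s) (by
    calc 2 ≤ M := hM2
      _ = M^1 := (pow_one M).symm
      _ ≤ M^s := Nat.pow_le_pow_right (by omega) hs) (l*Q+24*J) m hm hE J'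
  refine (measure_mono (LL_anti hM2 t R hRt (P7.trans hn))).trans (h5.trans (ENNReal.ofReal_le_ofReal ?_))
  have : 2 * R * (1 - 1 / (2 * (M:ℝ) * ((M^s : ℕ):ℝ) * ((l * Q + 24 * J : ℕ):ℝ)))^J' ≤ 2 * R * (1 / (M:ℝ)^s) := by gcongr
  refine (add_le_add_right this _).trans (le_of_eq ?_)
  push_cast; ring

lemma exists_det {M : ℕ} (hM : 3 ≤ M) (c : Fin M → ℂ) (hcol : ¬ Collinear ℝ (Set.range c)) :
    ∃ i0 i1 i2 : Fin M, i0 ≠ i1 ∧ i0 ≠ i2 ∧ (c i1 - c i0).re * (c i2 - c i0).im - (c i1 - c i0).im * (c i2 - c i0).re ≠ 0 := by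
  by_contra hc
  push Not at hc
  apply hcol
  by_cases hall : ∀ j, c j = c ⟨0, by omega⟩
  · rw [collinear_iff_of_mem (p₀ := c ⟨0, by omega⟩) (Set.mem_range_self _)]
    refine ⟨0, ?_⟩
    rintro _ ⟨j, rfl⟩
    exact ⟨0, by simp [hall j]⟩
  push Not at hall
  obtain ⟨i1, hi1⟩ := hall
  set i0 : Fin M := ⟨0, by omega⟩ with hi0
  rw [collinear_iff_of_mem (p₀ := c i0) (Set.mem_range_self _)]
  refine ⟨c i1 - c i0, ?_⟩
  rintro _ ⟨j, rfl⟩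
  have hd : (c i1 - c i0).re * (c j - c i0).im - (c i1 - c i0).im * (c j - c i0).re = 0 := by
    by_cases hj : i0 = j
    · subst hj; simp
    · exact hc i0 i1 j (fun h => hi1 (by rw [h])) hj
  set u := c i1 - c i0 with hu
  set v := c j - c i0 with hv
  have hu0 : u ≠ 0 := sub_ne_zero.2 hi1
  have hn : u.re * u.re + u.im * u.im ≠ 0 := by
    have := Complex.normSq_pos.2 hu0
    rw [Complex.normSq_apply] at this
    exact this.ne'
  refine ⟨(u.re * v.re + u.im * v.im) / (u.re * u.re + u.im * u.im), ?_⟩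
  have : c j = v + c i0 := by rw [hv]; ring
  rw [this, vadd_eq_add]
  congr 1
  apply Complex.ext
  · rw [Complex.smul_re, smul_eq_mul, div_mul_eq_mul_div, eq_div_iff hn]; linear_combination (-u.im) * hd
  · rw [Complex.smul_im, smul_eq_mul, div_mul_eq_mul_div, eq_div_iff hn]; linear_combination (u.re) * hd

end Fav

namespace Fav

lemma fav_bound (E : Set ℂ) (S : Set ℝ) (a b v : ℝ) (ha : 0 ≤ a) (hb : 0 ≤ b) (hv : 0 ≤ v) (hS : volume S ≤ ENNReal.ofReal v)
    (h1 : ∀ θ ∈ Set.Icc 0 Real.pi, θ ∉ S → volume (projDir θ E) ≤ ENNReal.ofReal a)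
    (h2 : ∀ θ, volume (projDir θ E) ≤ ENNReal.ofReal b) : fav E ≤ a + b * v := by
  have hpi := Real.pi_pos
  set V := toMeasurable volume S with hV
  have hVm : MeasurableSet V := measurableSet_toMeasurable _ _
  have hVv : volume V ≤ ENNReal.ofReal v := by rw [hV, measure_toMeasurable]; exact hS
  have hVt : volume V ≠ ⊤ := (hVv.trans_lt ENNReal.ofReal_lt_top).ne
  have hint : IntegrableOn (V.indicator fun _ => b) (Set.Ioc 0 Real.pi) := by
    apply IntegrableOn.mono_set (t := Set.univ) _ (Set.subset_univ _)
    rw [integrableOn_univ, integrable_indicator_iff hVm]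
    exact integrableOn_const hVt
  have hconst : IntegrableOn (fun _ : ℝ => a) (Set.Ioc 0 Real.pi) := integrableOn_const (by simp)
  have key : ∫ θ in (0:ℝ)..Real.pi, (volume (projDir θ E)).toReal ≤ a * Real.pi + b * v := by
    rw [intervalIntegral.integral_of_le hpi.le]
    calc ∫ θ in Set.Ioc 0 Real.pi, (volume (projDir θ E)).toReal
        ≤ ∫ θ in Set.Ioc 0 Real.pi, (a + V.indicator (fun _ => b) θ) := by
          apply integral_mono_of_nonneg
          · exact Filter.Eventually.of_forall fun θ => ENNReal.toReal_nonneg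
          · exact hconst.add hint
          · refine (ae_restrict_iff' measurableSet_Ioc).2 (Filter.Eventually.of_forall fun θ hθ => ?_)
            by_cases hθV : θ ∈ V
            · have := ENNReal.toReal_le_of_le_ofReal hb (h2 θ)
              simp only [Set.indicator_of_mem hθV]
              linarith
            · have := ENNReal.toReal_le_of_le_ofReal ha (h1 θ ⟨hθ.1.le, hθ.2⟩ fun h => hθV (subset_toMeasurable _ _ h))
              simp only [Set.indicator_of_notMem hθV]
              linarith
      _ = a * Real.pi + ∫ θ in Set.Ioc 0 Real.pi, V.indicator (fun _ => b) θ := by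
          rw [integral_add hconst hint]
          simp [hpi.le, mul_comm]
      _ ≤ a * Real.pi + b * v := by
          rw [integral_indicator hVm, setIntegral_const, smul_eq_mul, mul_comm b]
          gcongr
          rw [measureReal_def]
          apply ENNReal.toReal_le_of_le_ofReal hv
          exact (Measure.restrict_le_self _).trans hVv
  unfold fav
  have hpi1 : 1 ≤ Real.pi := by linarith [Real.pi_gt_three]
  calc 1 / Real.pi * ∫ θ in (0:ℝ)..Real.pi, (volume (projDir θ E)).toReal ≤ 1 / Real.pi * (a * Real.pi + b * v) := by gcongr
    _ = a + (b * v) / Real.pi := by field_simp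
    _ ≤ a + b * v := by
      gcongr
      exact div_le_self (by positivity) hpi1

lemma fav_s (M : ℕ) (hM : 3 ≤ M) (c : Fin M → ℂ) (hcol : ¬ Collinear ℝ (Set.range c)) (hinj : Function.Injective c)
    (T : Fin M → ℂ → ℂ) (hT : ∀ j z, T j z = z / (M : ℂ) + c j)
    (U : Set ℂ) (hUbdd : Bornology.IsBounded U) : ∃ p : ℕ, 1 ≤ p ∧ ∃ C : ℝ, 0 < C ∧ ∀ s n : ℕ, M^(p*s^2) ≤ n →
      fav (⋃ w : Fin n → Fin M, iterImg T U (List.ofFn w)) ≤ C / (M:ℝ)^s := by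
  classical
  have hpi := Real.pi_pos
  have hM3 : (3:ℝ) ≤ M := by exact_mod_cast hM
  have hM0 : (0:ℝ) < M := by linarith
  have hM1 : (1:ℝ) ≤ M := by linarith
  have hM2 : 2 ≤ M := by omega
  obtain ⟨RU, hRU0, hRU⟩ := hUbdd.exists_pos_norm_le
  obtain ⟨C0, hC0, hUb⟩ := U_bound
  obtain ⟨σ, hσ0, hσ1, hσ⟩ := phi_bad M hM
  obtain ⟨i0, i1, i2, h01, h02, hdet⟩ := exists_det hM c hcol
  set TT : ℝ := 1 + ∑ j, ‖c j‖ with hTT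
  have hcT : ∀ j, ‖c j‖ ≤ TT := fun j => by
    have := Finset.single_le_sum (f := fun j => ‖c j‖) (fun j _ => norm_nonneg _) (Finset.mem_univ j)
    linarith
  have hT1 : 1 ≤ TT := by
    have : 0 ≤ ∑ j, ‖c j‖ := Finset.sum_nonneg fun j _ => norm_nonneg _
    linarith
  set R : ℝ := 2 * TT + RU with hR
  have hR1 : 1 ≤ R := by linarith
  set δ : ℝ := 1 / (4 * TT) with hδ
  have hδ0 : 0 < δ := by positivity
  have hδ1 : 4 * TT * δ ≤ 1 := by rw [hδ]; field_simp; exact le_rfl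
  have hδ2 : δ ≤ 1 := by rw [hδ, div_le_one (by positivity)]; linarith
  have ht : ∀ θ j, |pr θ (c j)| ≤ TT := fun θ j => (pr_le θ _).trans (hcT j)
  have hRt : ∀ θ j, R / M + |pr θ (c j)| ≤ R := fun θ j => by
    have h1 : R / M ≤ R / 3 := by gcongr
    have := ht θ j
    linarith
  have hUR : ∀ z ∈ U, ‖z‖ ≤ R := fun z hz => (hRU z hz).trans (by linarith)
  obtain ⟨p, hp1, hp⟩ := params M hM TT R C0 σ δ hT1 hR1 hC0 hσ0 hσ1 hδ0 hδ2
  obtain ⟨C2, hC2, hex2⟩ := exc2 M hM _ _ hdet δ hδ0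
  set C1 : ℝ := ∑ j, 2 * Real.pi * (4 / ‖c i0 - c j‖) with hC1
  have hC10 : 0 ≤ C1 := Finset.sum_nonneg fun j _ => by positivity
  refine ⟨p, hp1, 8 * R + 2 * R * (C1 + C2), by positivity, ?_⟩
  intro s n hn
  have hms : (0:ℝ) < (M:ℝ)^s := by positivity
  have triv : ∀ θ, volume (projDir θ (⋃ w : Fin n → Fin M, iterImg T U (List.ofFn w))) ≤ ENNReal.ofReal (2 * R) := fun θ =>
    (measure_mono (proj_sub hM c T hT U R hUR θ n)).trans (LL_le hM2 _ R (hRt θ) n)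
  rcases Nat.eq_zero_or_pos s with rfl | hs
  · have := fav_bound _ ∅ (2*R) (2*R) 0 (by positivity) (by positivity) le_rfl (by simp) (fun θ _ _ => triv θ) triv
    have h3 : 0 ≤ 2 * R * (C1 + C2) := by positivity
    rw [pow_zero, div_one]
    linarith
  obtain ⟨l, J, mm, Q, J', hpar⟩ := hp s hs
  have h12 := (hpar _ _ _ _ rfl rfl rfl rfl).2.2.2.2.1
  set S1 : Set ℝ := ⋃ j ∈ Finset.univ.erase i0, {θ | θ ∈ Set.Icc 0 Real.pi ∧ |pr θ (c i0 - c j)| < 1 / (M:ℝ)^s} with hS1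
  set S2 : Set ℝ := {θ | θ ∈ Set.Icc 0 Real.pi ∧ ∃ x, δ ≤ x ∧ x ≤ δ * (M:ℝ)^(l+1) ∧
      nbad M (x * pr θ (c i1 - c i0) / (2*Real.pi)) (x * pr θ (c i2 - c i0) / (2*Real.pi)) (24*J) ≤ J} with hS2
  have v1 : volume S1 ≤ ENNReal.ofReal (C1 / (M:ℝ)^s) := by
    refine (measure_biUnion_finset_le _ _).trans ?_
    calc ∑ j ∈ Finset.univ.erase i0, volume {θ | θ ∈ Set.Icc 0 Real.pi ∧ |pr θ (c i0 - c j)| < 1 / (M:ℝ)^s}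
        ≤ ∑ j ∈ Finset.univ.erase i0, ENNReal.ofReal (2 * Real.pi * (4 * (1 / (M:ℝ)^s) / ‖c i0 - c j‖)) := by
          apply Finset.sum_le_sum
          intro j hj
          exact exc1 _ (sub_ne_zero.2 fun h => (Finset.mem_erase.1 hj).1 (hinj h).symm) _
      _ = ENNReal.ofReal (∑ j ∈ Finset.univ.erase i0, 2 * Real.pi * (4 * (1 / (M:ℝ)^s) / ‖c i0 - c j‖)) :=
          (ENNReal.ofReal_sum_of_nonneg fun j _ => by positivity).symm
      _ ≤ _ := by
          apply ENNReal.ofReal_le_ofReal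
          rw [hC1, Finset.sum_div]
          calc _ ≤ ∑ j, 2 * Real.pi * (4 * (1 / (M:ℝ)^s) / ‖c i0 - c j‖) :=
                Finset.sum_le_sum_of_subset_of_nonneg (Finset.subset_univ _) fun j _ _ => by positivity
            _ = _ := Finset.sum_congr rfl fun j _ => by ring
  have v2 : volume S2 ≤ ENNReal.ofReal (C2 / (M:ℝ)^s) := by
    refine (hex2 l J).trans (ENNReal.ofReal_le_ofReal ?_)
    rw [div_le_div_iff₀ (by positivity) hms, mul_assoc, ← pow_add]
    gcongr
  have v3 : volume (S1 ∪ S2) ≤ ENNReal.ofReal ((C1 + C2) / (M:ℝ)^s) := by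
    rw [add_div, ENNReal.ofReal_add (by positivity) (by positivity)]
    exact (measure_union_le _ _).trans (add_le_add v1 v2)
  have := fav_bound _ (S1 ∪ S2) (8 * R / (M:ℝ)^s) (2*R) _ (by positivity) (by positivity) (by positivity) v3 (by
    intro θ hθ hθS
    refine (measure_mono (proj_sub hM c T hT U R hUR θ n)).trans ?_
    refine theta_bound hM C0 hC0 hUb σ hσ0 hσ1 hσ TT R δ hT1 hR1 hδ0 hδ1 (M^(p*s^2)) s l J mm Q J' hs hpar
      (fun j => pr θ (c j)) (ht θ) (hRt θ) i0 i1 i2 h01 h02 ?_ ?_ n hn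
    · intro j hj
      by_contra hlt
      push Not at hlt
      apply hθS
      left
      rw [hS1, Set.mem_iUnion₂]
      refine ⟨j, Finset.mem_erase.2 ⟨hj, Finset.mem_univ _⟩, hθ, ?_⟩
      rw [pr_sub]; exact hlt
    · intro x hx1 hx2
      by_contra hlt
      push Not at hlt
      apply hθS
      right
      refine ⟨hθ, x, hx1, hx2, ?_⟩
      rw [pr_sub, pr_sub]; exact hlt) triv
  refine this.trans (le_of_eq ?_)
  ring

lemma main
    (M : ℕ) (hM : 3 ≤ M) (c : Fin M → ℂ)
    (hcol : ¬ Collinear ℝ (Set.range c))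
    (T : Fin M → ℂ → ℂ) (hT : ∀ j z, T j z = z / (M : ℂ) + c j)
    (U : Set ℂ) (hUne : U.Nonempty)
    (hUbdd : Bornology.IsBounded U)
    (hdisj : Pairwise fun i j => Disjoint (T i '' U) (T j '' U)) :
    ∃ c' > (0:ℝ), ∃ C > (0:ℝ), ∀ n : ℕ, 2 ≤ n →
      fav (⋃ w : Fin n → Fin M, iterImg T U (List.ofFn w)) ≤
        C * Real.exp (-c' * Real.sqrt (Real.log n)) := by
  have hinj : Function.Injective c := by
    intro i j hij
    by_contra hne
    obtain ⟨u, hu⟩ := hUne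
    exact Set.disjoint_left.1 (hdisj hne) ⟨u, hu, rfl⟩ ⟨u, hu, by rw [hT, hT, hij]⟩
  obtain ⟨p, hp1, C, hC, hmain⟩ := fav_s M hM c hcol hinj T hT U hUbdd
  have hM3 : (3:ℝ) ≤ M := by exact_mod_cast hM
  have hM0 : (0:ℝ) < M := by linarith
  have hp0 : (0:ℝ) < p := by exact_mod_cast hp1
  have hL : 0 < Real.log M := Real.log_pos (by linarith)
  set L := Real.log M with hLd
  refine ⟨L / Real.sqrt (p * L), by positivity, C * M, by positivity, ?_⟩
  intro n hn
  have hn0 : (0:ℝ) < n := by positivity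
  have hln : 0 ≤ Real.log n := Real.log_natCast_nonneg n
  set x := Real.sqrt (Real.log n) / Real.sqrt (p * L) with hx
  have hx0 : 0 ≤ x := by positivity
  set s := ⌊x⌋₊ with hs
  have hsx : (s:ℝ) ≤ x := Nat.floor_le hx0
  have hxs : x < s + 1 := Nat.lt_floor_add_one x
  have hxx : x^2 * (p * L) = Real.log n := by
    rw [hx, div_pow, Real.sq_sqrt hln, Real.sq_sqrt (by positivity)]; field_simp
  have hle : M^(p*s^2) ≤ n := by
    have h1 : ((p*s^2 : ℕ):ℝ) * L ≤ Real.log n := by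
      rw [← hxx]; push_cast
      have : (s:ℝ)^2 ≤ x^2 := by gcongr
      nlinarith [mul_le_mul_of_nonneg_right this (show 0 ≤ p * L by positivity)]
    rw [hLd, ← Real.log_pow] at h1
    have h2 := (Real.log_le_log_iff (by positivity) hn0).1 h1
    exact_mod_cast h2
  refine (hmain s n hle).trans ?_
  have e1 : (M:ℝ)^s = Real.exp (s * L) := by rw [Real.exp_nat_mul, hLd, Real.exp_log hM0]
  have e2 : (M:ℝ) = Real.exp L := by rw [hLd, Real.exp_log hM0]
  have e3 : -(L / Real.sqrt (p * L)) * Real.sqrt (Real.log n) = -(L * x) := by rw [hx]; ring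
  rw [e3, e1, div_eq_mul_inv, ← Real.exp_neg, mul_assoc]
  apply mul_le_mul_of_nonneg_left _ hC.le
  rw [e2, ← Real.exp_add]
  apply Real.exp_le_exp.2
  nlinarith

end Fav

end

/-- For a non-degenerate self-similar family of `M ≥ 3` maps of ratio `1/M`
satisfying the open set condition, `Fav(E_n) ≤ C e^{-c√(log n)}`. -/
theorem favard_selfsimilar_sqrtlog
    (M : ℕ) (hM : 3 ≤ M) (c : Fin M → ℂ)
    (hcol : ¬ Collinear ℝ (Set.range c))
    (T : Fin M → ℂ → ℂ) (hT : ∀ j z, T j z = z / (M : ℂ) + c j)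
    (U : Set ℂ) (hUne : U.Nonempty) (hUopen : IsOpen U)
    (hUbdd : Bornology.IsBounded U)
    (hsub : ∀ j, T j '' U ⊆ U)
    (hdisj : Pairwise fun i j => Disjoint (T i '' U) (T j '' U)) :
    ∃ c' > (0:ℝ), ∃ C > (0:ℝ), ∀ n : ℕ, 2 ≤ n →
      fav (⋃ w : Fin n → Fin M, iterImg T U (List.ofFn w)) ≤
        C * Real.exp (-c' * Real.sqrt (Real.log n)) := by
  exact Fav.main M hM c hcol T hT U hUne hUbdd hdisj
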